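/- arXiv:0802.3571 — 3 statements merged into one kernel-verified Lean document; each statement's English description precedes it below -/
import Mathlib

section
/- For every n ≥ 1 and every word w = (b₀, …, b_{n−1}) ∈ Bₙ, the first digit b₀ lies in {a₁, a₂}, and there exists an integer i with 0 ≤ i < n such that the image of Δ(w) under the n-th iterate of T equals the interval [0, Tⁱ(a₂ − a₁)) or the interval [0, Tⁱ(βa₁ − a₂)), where Tⁱ denotes the i-th iterate of T applied to the indicated point. -/
open MeasureTheory Set

/-- The greedy β-transformation with deleted digit set `{0, a₁, a₂}`:
`T x = βx` on `Δ(0) = [0, a₁/β)`, `T x = βx − a₁` on `Δ(a₁) = [a₁/β, a₂/β)`,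
and `T x = βx − a₂` on `Δ(a₂) = [a₂/β, a₁)`. -/
noncomputable def greedyT (β a₁ a₂ : ℝ) (x : ℝ) : ℝ :=
  if x < a₁ / β then β * x
  else if x < a₂ / β then β * x - a₁
  else β * x - a₂

/-- The interval `Δ(b)` associated to a digit `b ∈ {0, a₁, a₂}`. -/
noncomputable def digitInt (β a₁ a₂ : ℝ) (b : ℝ) : Set ℝ :=
  if b = 0 then Set.Ico 0 (a₁ / β)
  else if b = a₁ then Set.Ico (a₁ / β) (a₂ / β)
  else Set.Ico (a₂ / β) a₁

/-- The fundamental interval `Δ(w) = ⋂_{k < n} T⁻ᵏ Δ(b_k)` of a word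
`w = (b₀, …, b_{n−1})`. -/
noncomputable def cyl (β a₁ a₂ : ℝ) (w : List ℝ) : Set ℝ :=
  ⋂ k ∈ Finset.range w.length,
    (greedyT β a₁ a₂)^[k] ⁻¹' digitInt β a₁ a₂ (w.getD k 0)

/-- `w` is a word over the alphabet `A = {0, a₁, a₂}`. -/
def isWord (a₁ a₂ : ℝ) (w : List ℝ) : Prop := ∀ b ∈ w, b = 0 ∨ b = a₁ ∨ b = a₂

/-- The fundamental interval `Δ(w)` is full: `λ(Δ(w)) = a₁/β^|w|`. -/
def isFull (β a₁ a₂ : ℝ) (w : List ℝ) : Prop :=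
  volume (cyl β a₁ a₂ w) = ENNReal.ofReal (a₁ / β ^ w.length)

/-- Condition (6): `a₁ · max (β−1) 1 < a₂ < a₁ · min 2 β`. -/
def condition6 (β a₁ a₂ : ℝ) : Prop :=
  a₁ * max (β - 1) 1 < a₂ ∧ a₂ < a₁ * min 2 β

/-- `w ∈ Bₙ`: `w` is a word of length `n` over `A` with `λ(Δ(w)) > 0`, `Δ(w)`
non-full, and `Δ(w′)` non-full for every nonempty proper prefix `w′` of `w`. -/
def memB (β a₁ a₂ : ℝ) (n : ℕ) (w : List ℝ) : Prop :=
  w.length = n ∧ isWord a₁ a₂ w ∧ 0 < volume (cyl β a₁ a₂ w) ∧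
    ¬ isFull β a₁ a₂ w ∧
    ∀ w' : List ℝ, w' ≠ [] → w' <+: w → w' ≠ w → ¬ isFull β a₁ a₂ w'

/-- `κ(n)`: the number of elements of `Bₙ`. -/
noncomputable def kappa (β a₁ a₂ : ℝ) (n : ℕ) : ℕ :=
  {w : List ℝ | memB β a₁ a₂ n w}.ncard

/-- `T^|w|` maps `Δ(w)` affinely, with slope `β^|w|`, onto `[0, c)`. -/
def GoodCyl (β a₁ a₂ : ℝ) (w : List ℝ) (c : ℝ) : Prop :=
  ∃ l : ℝ, cyl β a₁ a₂ w = Set.Ico l (l + c / β ^ w.length) ∧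
    ∀ x ∈ cyl β a₁ a₂ w, (greedyT β a₁ a₂)^[w.length] x = β ^ w.length * (x - l)

lemma goodCyl_volume {β a₁ a₂ : ℝ} {w : List ℝ} {c : ℝ} (h : GoodCyl β a₁ a₂ w c) :
    volume (cyl β a₁ a₂ w) = ENNReal.ofReal (c / β ^ w.length) := by
  obtain ⟨l, h1, -⟩ := h
  rw [h1, Real.volume_Ico]
  congr 1
  ring

lemma goodCyl_image {β a₁ a₂ : ℝ} (hβ : 1 < β) {w : List ℝ} {c : ℝ}
    (h : GoodCyl β a₁ a₂ w c) :
    (greedyT β a₁ a₂)^[w.length] '' cyl β a₁ a₂ w = Set.Ico 0 c := by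
  obtain ⟨l, h1, h2⟩ := h
  have hB : 0 < β ^ w.length := by positivity
  ext y
  constructor
  · rintro ⟨x, hx, rfl⟩
    rw [h2 x hx]
    rw [h1] at hx
    obtain ⟨hx1, hx2⟩ := hx
    refine ⟨mul_nonneg hB.le (by linarith), ?_⟩
    have : x - l < c / β ^ w.length := by linarith
    rw [lt_div_iff₀ hB] at this
    linarith
  · rintro ⟨hy1, hy2⟩
    have hx : l + y / β ^ w.length ∈ cyl β a₁ a₂ w := by
      rw [h1]
      refine ⟨by linarith [div_nonneg hy1 hB.le], ?_⟩
      have := div_lt_div_of_pos_right hy2 hB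
      linarith
    refine ⟨_, hx, ?_⟩
    rw [h2 _ hx]
    field_simp
    ring

lemma cyl_append (β a₁ a₂ : ℝ) (w : List ℝ) (b : ℝ) :
    cyl β a₁ a₂ (w ++ [b]) =
      cyl β a₁ a₂ w ∩ (greedyT β a₁ a₂)^[w.length] ⁻¹' digitInt β a₁ a₂ b := by
  ext x
  simp only [cyl, Set.mem_iInter, Finset.mem_range, List.length_append, List.length_singleton,
    Set.mem_inter_iff]
  constructor
  · intro h
    refine ⟨fun k hk => ?_, ?_⟩
    · have := h k (by omega)
      rwa [List.getD_append _ _ _ _ hk] at this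
    · have := h w.length (by omega)
      rw [List.getD_append_right _ _ _ _ le_rfl] at this
      simpa using this
  · rintro ⟨h1, h2⟩ k hk
    rcases Nat.lt_succ_iff_lt_or_eq.mp hk with hk | rfl
    · rw [List.getD_append _ _ _ _ hk]
      exact h1 k hk
    · rw [List.getD_append_right _ _ _ _ le_rfl]
      simpa using h2

lemma goodCyl_single {β a₁ a₂ : ℝ} (hβ : 1 < β) {b q : ℝ}
    (hd : digitInt β a₁ a₂ b = Set.Ico (b / β) q)
    (hT : ∀ y ∈ digitInt β a₁ a₂ b, greedyT β a₁ a₂ y = β * y - b) :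
    GoodCyl β a₁ a₂ [b] (β * q - b) := by
  have hβ0 : β ≠ 0 := by positivity
  have hc : cyl β a₁ a₂ [b] = digitInt β a₁ a₂ b := by
    simp [cyl]
  refine ⟨b / β, ?_, ?_⟩
  · rw [hc, hd]
    congr 1
    simp
    field_simp
    ring
  · intro x hx
    rw [hc] at hx
    simp [hT x hx]
    field_simp

lemma goodCyl_step {β a₁ a₂ : ℝ} (hβ : 1 < β) {w : List ℝ} {c b q : ℝ}
    (h : GoodCyl β a₁ a₂ w c) (hb : 0 ≤ b)
    (hd : digitInt β a₁ a₂ b = Set.Ico (b / β) q)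
    (hT : ∀ y ∈ digitInt β a₁ a₂ b, greedyT β a₁ a₂ y = β * y - b) :
    GoodCyl β a₁ a₂ (w ++ [b]) (β * min c q - b) := by
  obtain ⟨l, h1, h2⟩ := h
  have hβ0 : 0 < β := by positivity
  have hB : 0 < β ^ w.length := by positivity
  have hbb : 0 ≤ b / β := by positivity
  refine ⟨l + b / β / β ^ w.length, ?_, ?_⟩
  · have e : l + b / β / β ^ w.length + (β * min c q - b) / β ^ (w ++ [b]).length
        = l + min c q / β ^ w.length := by
      rw [List.length_append, List.length_singleton, pow_succ]
      field_simp
      ring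
    rw [e, cyl_append]
    ext x
    have key : ∀ t, (β ^ w.length * (x - l) < t ↔ x < l + t / β ^ w.length) := by
      intro t
      rw [← sub_lt_iff_lt_add', lt_div_iff₀ hB, mul_comm]
    have key2 : ∀ t, (t ≤ β ^ w.length * (x - l) ↔ l + t / β ^ w.length ≤ x) := by
      intro t
      rw [← not_lt, key, not_lt]
    constructor
    · rintro ⟨hx, hy⟩
      rw [Set.mem_preimage, h2 x hx, hd] at hy
      rw [h1] at hx
      refine ⟨(key2 _).1 hy.1, (key _).1 (lt_min ((key _).2 hx.2) hy.2)⟩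
    · rintro ⟨hx, hy⟩
      have hx' := (key2 _).2 hx
      have hy' := (key _).2 hy
      rw [lt_min_iff] at hy'
      have hm : x ∈ cyl β a₁ a₂ w := by
        rw [h1]
        refine ⟨?_, (key _).1 hy'.1⟩
        have : 0 ≤ b / β / β ^ w.length := by positivity
        linarith
      refine ⟨hm, ?_⟩
      rw [Set.mem_preimage, h2 x hm, hd]
      exact ⟨hx', hy'.2⟩
  · intro x hx
    rw [cyl_append] at hx
    have hy := hx.2
    rw [Set.mem_preimage] at hy
    rw [List.length_append, List.length_singleton, Function.iterate_succ_apply', hT _ hy,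
      h2 x hx.1, pow_succ]
    field_simp
    ring

/-- The invariant: `c` is an iterate of one of the two critical values. -/
def IsIter (β a₁ a₂ : ℝ) (n : ℕ) (c : ℝ) : Prop :=
  ∃ i < n, c = (greedyT β a₁ a₂)^[i] (a₂ - a₁) ∨ c = (greedyT β a₁ a₂)^[i] (β * a₁ - a₂)

lemma isIter_next {β a₁ a₂ : ℝ} {n : ℕ} {c : ℝ} (h : IsIter β a₁ a₂ n c) :
    IsIter β a₁ a₂ (n + 1) (greedyT β a₁ a₂ c) := by
  obtain ⟨i, hi, h⟩ := h
  refine ⟨i + 1, by omega, ?_⟩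
  rw [Function.iterate_succ_apply', Function.iterate_succ_apply']
  rcases h with h | h
  · left; rw [h]
  · right; rw [h]

lemma main_aux (β a₁ a₂ : ℝ) (hβ1 : 1 < β)
    (ha₁ : 0 < a₁) (h12 : a₁ < a₂) (hc : condition6 β a₁ a₂) (w : List ℝ) :
    w ≠ [] → isWord a₁ a₂ w → 0 < volume (cyl β a₁ a₂ w) →
    (∀ w' : List ℝ, w' ≠ [] → w' <+: w → ¬ isFull β a₁ a₂ w') →
    (w.headI = a₁ ∨ w.headI = a₂) ∧
      ∃ c, GoodCyl β a₁ a₂ w c ∧ c < a₁ ∧ IsIter β a₁ a₂ w.length c := by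
  have hβ0 : 0 < β := by positivity
  obtain ⟨hc1, hc2⟩ := hc
  have k1 : a₁ * (β - 1) < a₂ :=
    (mul_le_mul_of_nonneg_left (le_max_left _ _) ha₁.le).trans_lt hc1
  have k2 : a₂ < a₁ * 2 := hc2.trans_le (mul_le_mul_of_nonneg_left (min_le_left _ _) ha₁.le)
  have k3 : a₂ < a₁ * β := hc2.trans_le (mul_le_mul_of_nonneg_left (min_le_right _ _) ha₁.le)
  have k4 : a₁ / β < a₂ / β := div_lt_div_of_pos_right h12 hβ0
  have k5 : a₂ / β < a₁ := by rwa [div_lt_iff₀ hβ0]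
  have e1 : β * (a₁ / β) = a₁ := by field_simp
  have e2 : β * (a₂ / β) = a₂ := by field_simp
  have d0 : digitInt β a₁ a₂ 0 = Set.Ico (0 / β) (a₁ / β) := by simp [digitInt]
  have d1 : digitInt β a₁ a₂ a₁ = Set.Ico (a₁ / β) (a₂ / β) := by simp [digitInt, ha₁.ne']
  have d2 : digitInt β a₁ a₂ a₂ = Set.Ico (a₂ / β) a₁ := by
    simp [digitInt, h12.ne', (ha₁.trans h12).ne']
  have t0 : ∀ y ∈ digitInt β a₁ a₂ 0, greedyT β a₁ a₂ y = β * y - 0 := by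
    intro y hy
    rw [d0] at hy
    simp [greedyT, hy.2]
  have t1 : ∀ y ∈ digitInt β a₁ a₂ a₁, greedyT β a₁ a₂ y = β * y - a₁ := by
    intro y hy
    rw [d1] at hy
    simp [greedyT, hy.2, not_lt.2 hy.1]
  have t2 : ∀ y ∈ digitInt β a₁ a₂ a₂, greedyT β a₁ a₂ y = β * y - a₂ := by
    intro y hy
    rw [d2] at hy
    simp [greedyT, not_lt.2 hy.1, not_lt.2 (k4.le.trans hy.1)]
  induction w using List.reverseRecOn with
  | nil => intro h; exact absurd rfl h
  | append_singleton w b ih =>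
    intro _ hword hpos hnf
    have hnfull := hnf (w ++ [b]) (by simp) (List.prefix_refl _)
    have hpc : ∀ c, GoodCyl β a₁ a₂ (w ++ [b]) c → 0 < c ∧ c ≠ a₁ := by
      intro c hg
      have hv := goodCyl_volume hg
      refine ⟨?_, ?_⟩
      · rw [hv, ENNReal.ofReal_pos] at hpos
        exact (div_pos_iff_of_pos_right (by positivity)).1 hpos
      · rintro rfl
        exact hnfull hv
    have hb : b = 0 ∨ b = a₁ ∨ b = a₂ := hword b (by simp)
    by_cases hwe : w = []
    · subst hwe
      simp only [List.nil_append] at hpc ⊢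
      rcases hb with rfl | rfl | rfl
      · have g := goodCyl_single hβ1 d0 t0
        exact absurd (by linarith) (hpc _ g).2
      · have g := goodCyl_single hβ1 d1 t1
        refine ⟨by simp, _, g, by linarith, 0, by simp, ?_⟩
        left
        simp [e2]
      · have g := goodCyl_single hβ1 d2 t2
        refine ⟨by simp, _, g, by linarith, 0, by simp, ?_⟩
        right
        simp
    · obtain ⟨hh, c, g, hca, hit⟩ := ih hwe (fun x hx => hword x (by simp [hx]))
        (hpos.trans_le (measure_mono (by rw [cyl_append]; exact Set.inter_subset_left)))
        (fun w' h1 h2 => hnf w' h1 (h2.trans (List.prefix_append _ _)))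
      refine ⟨?_, ?_⟩
      · cases w with
        | nil => exact absurd rfl hwe
        | cons x xs => simpa using hh
      have hit' := isIter_next hit
      have hlen : (w ++ [b]).length = w.length + 1 := by simp
      rw [hlen]
      rcases hb with rfl | rfl | rfl
      · have g' := goodCyl_step hβ1 g le_rfl d0 t0
        obtain ⟨p1, p2⟩ := hpc _ g'
        rcases le_total (a₁ / β) c with h | h
        · rw [min_eq_right h] at p2
          exact absurd (by linarith) p2
        rcases h.eq_or_lt with h | h
        · rw [h, min_self] at p2
          exact absurd (by linarith) p2
        rw [min_eq_left h.le] at g' p1 p2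
        have hc0 : 0 < c := by
          have : 0 < β * c := by linarith
          exact (mul_pos_iff_of_pos_left hβ0).1 this
        have hTc : greedyT β a₁ a₂ c = β * c - 0 := t0 c (by rw [d0]; simp [hc0.le, h])
        refine ⟨_, g', ?_, hTc ▸ hit'⟩
        have := mul_lt_mul_of_pos_left h hβ0
        linarith
      · have g' := goodCyl_step hβ1 g ha₁.le d1 t1
        obtain ⟨p1, p2⟩ := hpc _ g'
        rcases le_or_gt (a₂ / β) c with h | h
        · rw [min_eq_right h] at g'
          refine ⟨_, g', by linarith, 0, by omega, ?_⟩
          left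
          simp [e2]
        rw [min_eq_left h.le] at g' p1 p2
        have hc0 : b / β < c := by
          rw [div_lt_iff₀ hβ0]
          linarith
        have hTc := t1 c (by rw [d1]; exact ⟨hc0.le, h⟩)
        refine ⟨_, g', ?_, hTc ▸ hit'⟩
        have := mul_lt_mul_of_pos_left h hβ0
        linarith
      · have g' := goodCyl_step hβ1 g (ha₁.trans h12).le d2 t2
        obtain ⟨p1, p2⟩ := hpc _ g'
        rw [min_eq_left hca.le] at g' p1 p2
        have hc0 : b / β < c := by
          rw [div_lt_iff₀ hβ0]
          linarith
        have hTc := t2 c (by rw [d2]; exact ⟨hc0.le, hca⟩)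
        refine ⟨_, g', ?_, hTc ▸ hit'⟩
        have := mul_lt_mul_of_pos_left hca hβ0
        linarith

/-- For every `n ≥ 1` and every word `w = (b₀, …, b_{n−1}) ∈ Bₙ`,
the first digit `b₀` lies in `{a₁, a₂}`, and there is `0 ≤ i < n` such that
`Tⁿ(Δ(w))` equals `[0, Tⁱ(a₂ − a₁))` or `[0, Tⁱ(βa₁ − a₂))`. -/
theorem stmt5 (β a₁ a₂ : ℝ) (hβ1 : 1 < β) (hβ3 : β < 3)
    (ha₁ : 0 < a₁) (h12 : a₁ < a₂) (hc : condition6 β a₁ a₂)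
    (n : ℕ) (hn : 1 ≤ n) (w : List ℝ) (hw : memB β a₁ a₂ n w) :
    (w.headI = a₁ ∨ w.headI = a₂) ∧
    ∃ i < n,
      (greedyT β a₁ a₂)^[n] '' cyl β a₁ a₂ w =
        Set.Ico 0 ((greedyT β a₁ a₂)^[i] (a₂ - a₁)) ∨
      (greedyT β a₁ a₂)^[n] '' cyl β a₁ a₂ w =
        Set.Ico 0 ((greedyT β a₁ a₂)^[i] (β * a₁ - a₂)) := by
  obtain ⟨rfl, hword, hpos, hnf, hpre⟩ := hw
  have hne : w ≠ [] := by
    rintro rfl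
    simp at hn
  obtain ⟨h1, c, g, -, i, hi, h⟩ := main_aux β a₁ a₂ hβ1 ha₁ h12 hc w hne hword hpos (by
    intro w' hw1 hw2
    by_cases e : w' = w
    · rw [e]; exact hnf
    · exact hpre w' hw1 hw2 e)
  refine ⟨h1, i, hi, ?_⟩
  rw [goodCyl_image hβ1 g]
  rcases h with h | h
  · left; rw [← h]
  · right; rw [← h]
end

section
/- The measure μ is a finite measure on [0, a₁) equivalent to Lebesgue measure on [0, a₁), and μ is invariant under the greedy β-transformation T: for every Borel set E ⊆ [0, a₁), μ(T⁻¹E) = μ(E). -/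
open MeasureTheory Set

/-- The density `φ = 1 + Σ_{n≥1} Σ_{w ∈ Bₙ} β^(−n)·1_{TⁿΔ(w)}`. -/
noncomputable def phi (β a₁ a₂ : ℝ) (x : ℝ) : ℝ :=
  1 + ∑' n : ℕ, ∑' w : {w : List ℝ // memB β a₁ a₂ (n + 1) w},
    Set.indicator ((greedyT β a₁ a₂)^[n + 1] '' cyl β a₁ a₂ w.1)
      (fun _ => (β ^ (n + 1))⁻¹) x

/-- The measure `μ` on `[0, a₁)` with density `φ` with respect to Lebesgue
measure: `μ(E) = ∫_E φ dλ` for Borel `E ⊆ [0, a₁)`. -/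
noncomputable def muMeas (β a₁ a₂ : ℝ) : Measure ℝ :=
  (volume.restrict (Set.Ico 0 a₁)).withDensity
    fun x => ENNReal.ofReal (phi β a₁ a₂ x)


noncomputable def uu (β a₁ a₂ b : ℝ) : ℝ :=
  if b = 0 then a₁ / β else if b = a₁ then a₂ / β else a₁

noncomputable def stp (β a₁ a₂ c b : ℝ) : ℝ := max 0 (β * (min c (uu β a₁ a₂ b) - b / β))

noncomputable def cw (β a₁ a₂ : ℝ) (w : List ℝ) : ℝ := w.foldl (stp β a₁ a₂) a₁

def Hyp (β a₁ a₂ : ℝ) : Prop :=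
  1 < β ∧ 0 < a₁ ∧ a₁ < a₂ ∧ a₂ < 2 * a₁ ∧ a₂ < β * a₁ ∧ (β - 1) * a₁ < a₂

def AA (a₁ a₂ b : ℝ) : Prop := b = 0 ∨ b = a₁ ∨ b = a₂

lemma digit_eq {β a₁ a₂ : ℝ} (h : Hyp β a₁ a₂) {b : ℝ} (hb : AA a₁ a₂ b) :
    digitInt β a₁ a₂ b = Ico (b / β) (uu β a₁ a₂ b) := by
  obtain ⟨h1, h2, h3, h4, h5, h6⟩ := h
  unfold digitInt uu
  rcases hb with rfl | rfl | rfl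
  · simp
  · simp [h2.ne']
  · simp [(h2.trans h3).ne', h3.ne']

lemma uu_le {β a₁ a₂ : ℝ} (h : Hyp β a₁ a₂) {b : ℝ} (hb : AA a₁ a₂ b) :
    uu β a₁ a₂ b ≤ a₁ ∧ β * (uu β a₁ a₂ b - b / β) ≤ a₁ ∧ 0 ≤ b / β := by
  obtain ⟨h1, h2, h3, h4, h5, h6⟩ := h
  have hβ : 0 < β := by linarith
  unfold uu
  have e1 : a₁ / β ≤ a₁ := div_le_self h2.le h1.le
  have e2 : a₂ / β ≤ a₁ := by rw [div_le_iff₀ hβ]; linarith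
  rw [mul_sub, mul_div_cancel₀ _ hβ.ne']
  rcases hb with rfl | rfl | rfl
  · simp only [if_true]; refine ⟨e1, ?_, by simp⟩
    rw [mul_div_cancel₀ _ hβ.ne']; linarith
  · simp only [h2.ne', if_false, if_true]
    refine ⟨e2, ?_, by positivity⟩
    rw [mul_div_cancel₀ _ hβ.ne']; linarith
  · simp only [(h2.trans h3).ne', h3.ne', if_false]
    exact ⟨le_rfl, by linarith, by have := h2.trans h3; positivity⟩

lemma T_eq {β a₁ a₂ : ℝ} (h : Hyp β a₁ a₂) {b : ℝ} (hb : AA a₁ a₂ b) {x : ℝ}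
    (hx : x ∈ digitInt β a₁ a₂ b) : greedyT β a₁ a₂ x = β * x - b := by
  have hx' := hx
  rw [digit_eq h hb] at hx'
  obtain ⟨h1, h2, h3, h4, h5, h6⟩ := h
  have hβ : 0 < β := by linarith
  have e : a₁ / β < a₂ / β := by gcongr
  unfold uu at hx'
  unfold greedyT
  rcases hb with rfl | rfl | rfl
  · simp only [if_true, mem_Ico] at hx'; simp [hx'.2]
  · simp only [h2.ne', if_false, if_true, mem_Ico] at hx'; simp [hx'.2, not_lt.2 hx'.1]
  · simp only [mem_Ico] at hx'
    rw [if_neg (not_lt.2 (e.le.trans hx'.1)), if_neg (not_lt.2 hx'.1)]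

lemma mem_cyl {β a₁ a₂ : ℝ} {w : List ℝ} {x : ℝ} : x ∈ cyl β a₁ a₂ w ↔
    ∀ k < w.length, (greedyT β a₁ a₂)^[k] x ∈ digitInt β a₁ a₂ (w.getD k 0) := by
  simp [cyl]

lemma mem_cyl_append {β a₁ a₂ : ℝ} {w : List ℝ} {b x : ℝ} : x ∈ cyl β a₁ a₂ (w ++ [b]) ↔
    x ∈ cyl β a₁ a₂ w ∧ (greedyT β a₁ a₂)^[w.length] x ∈ digitInt β a₁ a₂ b := by
  rw [mem_cyl, mem_cyl]
  constructor
  · intro hh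
    refine ⟨fun k hk => ?_, ?_⟩
    · have := hh k (by simp; omega)
      rwa [List.getD_append _ _ _ _ hk] at this
    · have := hh w.length (by simp)
      simpa using this
  · rintro ⟨p, q⟩ k hk
    simp at hk
    rcases Nat.lt_or_ge k w.length with h | h
    · rw [List.getD_append _ _ _ _ h]; exact p k h
    · have : k = w.length := by omega
      subst this
      simpa using q

lemma cw_append {β a₁ a₂ : ℝ} (w : List ℝ) (b : ℝ) :
    cw β a₁ a₂ (w ++ [b]) = stp β a₁ a₂ (cw β a₁ a₂ w) b := by
  simp [cw]

lemma stp_nonneg {β a₁ a₂ c b : ℝ} : 0 ≤ stp β a₁ a₂ c b := le_max_left _ _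

lemma cw_nonneg {β a₁ a₂ : ℝ} (h : Hyp β a₁ a₂) (w : List ℝ) : 0 ≤ cw β a₁ a₂ w := by
  rcases List.eq_nil_or_concat w with rfl | ⟨v, b, rfl⟩
  · exact h.2.1.le
  · rw [List.concat_eq_append, cw_append]; exact stp_nonneg

lemma stp_le {β a₁ a₂ : ℝ} (h : Hyp β a₁ a₂) {b : ℝ} (hb : AA a₁ a₂ b) (c : ℝ) :
    stp β a₁ a₂ c b ≤ a₁ := by
  have := uu_le h hb
  refine max_le h.2.1.le (le_trans ?_ this.2.1)
  have : 0 ≤ β := by linarith [h.1]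
  gcongr; exact min_le_right _ _

lemma good {β a₁ a₂ : ℝ} (h : Hyp β a₁ a₂) (w : List ℝ) (hw : isWord a₁ a₂ w) :
    ∃ p, cyl β a₁ a₂ w ∩ Ico 0 a₁ = Ico p (p + cw β a₁ a₂ w / β ^ w.length) ∧
      ∀ x ∈ cyl β a₁ a₂ w ∩ Ico 0 a₁,
        (greedyT β a₁ a₂)^[w.length] x = β ^ w.length * (x - p) := by
  have hβ : 0 < β := by linarith [h.1]
  induction w using List.reverseRecOn with
  | nil => exact ⟨0, by simp [cyl, cw], by simp⟩
  | append_singleton w b ih =>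
    obtain ⟨p, hp1, hp2⟩ := ih (fun b hb => hw b (by simp [hb]))
    have hb : AA a₁ a₂ b := hw b (by simp)
    have hl := (uu_le h hb).2.2
    have hP : 0 < β ^ w.length := by positivity
    refine ⟨p + b / β / β ^ w.length, ?_, ?_⟩
    · ext x
      have : x ∈ cyl β a₁ a₂ (w ++ [b]) ∩ Ico 0 a₁ ↔
          x ∈ cyl β a₁ a₂ w ∩ Ico 0 a₁ ∧ β ^ w.length * (x - p) ∈ Ico (b / β) (uu β a₁ a₂ b) := by
        rw [mem_inter_iff, mem_cyl_append, digit_eq h hb]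
        constructor
        · rintro ⟨⟨q1, q2⟩, q3⟩
          exact ⟨⟨q1, q3⟩, by rwa [← hp2 x ⟨q1, q3⟩]⟩
        · rintro ⟨q1, q2⟩
          rw [← hp2 x q1] at q2
          exact ⟨⟨q1.1, q2⟩, q1.2⟩
      rw [this, hp1, cw_append, stp]
      obtain ⟨y, rfl⟩ : ∃ y, x = p + y / β ^ w.length :=
        ⟨β ^ w.length * (x - p), by field_simp; ring⟩
      have e1 : β ^ w.length * (p + y / β ^ w.length - p) = y := by field_simp; ring
      have e2 : p + b / β / β ^ w.length +
          max 0 (β * (min (cw β a₁ a₂ w) (uu β a₁ a₂ b) - b / β)) / β ^ (w ++ [b]).length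
          = p + max (b / β) (min (cw β a₁ a₂ w) (uu β a₁ a₂ b)) / β ^ w.length := by
        have : max (b / β) (min (cw β a₁ a₂ w) (uu β a₁ a₂ b)) = b / β +
          max 0 (β * (min (cw β a₁ a₂ w) (uu β a₁ a₂ b) - b / β)) / β := by
          rw [← max_div_div_right hβ.le, mul_div_cancel_left₀ _ hβ.ne', ← max_add_add_left]
          simp
        rw [this]
        simp only [List.length_append, List.length_singleton, pow_succ]
        field_simp
        ring
      rw [e1, e2]
      simp only [mem_Ico, le_add_iff_nonneg_right, add_le_add_iff_left, add_lt_add_iff_left,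
        div_le_div_iff_of_pos_right hP, div_lt_div_iff_of_pos_right hP, lt_max_iff, lt_min_iff]
      have e3 : 0 ≤ y / β ^ w.length ↔ 0 ≤ y := by
        rw [le_div_iff₀ hP]; simp
      rw [e3]
      constructor
      · rintro ⟨⟨r1, r2⟩, r3, r4⟩; exact ⟨r3, Or.inr ⟨r2, r4⟩⟩
      · rintro ⟨r3, r | ⟨r2, r4⟩⟩
        · linarith
        · exact ⟨⟨by linarith, r2⟩, r3, r4⟩
    · rintro x ⟨q1, q2⟩
      rw [mem_cyl_append] at q1
      rw [List.length_append, List.length_singleton, Function.iterate_succ_apply',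
        T_eq h hb q1.2, hp2 x ⟨q1.1, q2⟩]
      field_simp; ring

lemma cyl_sub {β a₁ a₂ : ℝ} (h : Hyp β a₁ a₂) (w : List ℝ) (hw : isWord a₁ a₂ w)
    (hne : w ≠ []) : cyl β a₁ a₂ w ∩ Ico 0 a₁ = cyl β a₁ a₂ w := by
  rw [inter_eq_left]
  intro x hx
  rw [mem_cyl] at hx
  obtain ⟨b, v, rfl⟩ := List.exists_cons_of_ne_nil hne
  have hb : AA a₁ a₂ b := hw b (by simp)
  have := hx 0 (by simp)
  simp only [Function.iterate_zero, id, List.getD_cons_zero] at this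
  rw [digit_eq h hb] at this
  have q := uu_le h hb
  exact ⟨q.2.2.trans this.1, this.2.trans_le q.1⟩

lemma vol_cyl {β a₁ a₂ : ℝ} (h : Hyp β a₁ a₂) (w : List ℝ) (hw : isWord a₁ a₂ w)
    (hne : w ≠ []) :
    volume (cyl β a₁ a₂ w) = ENNReal.ofReal (cw β a₁ a₂ w / β ^ w.length) := by
  obtain ⟨p, hp, -⟩ := good h w hw
  rw [cyl_sub h w hw hne] at hp
  rw [hp, Real.volume_Ico]; congr 1; ring

lemma full_iff {β a₁ a₂ : ℝ} (h : Hyp β a₁ a₂) (w : List ℝ) (hw : isWord a₁ a₂ w)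
    (hne : w ≠ []) : isFull β a₁ a₂ w ↔ cw β a₁ a₂ w = a₁ := by
  have hβ : 0 < β := by linarith [h.1]
  have hP : 0 < β ^ w.length := by positivity
  have := cw_nonneg h w
  have := h.2.1
  rw [isFull, vol_cyl h w hw hne, ENNReal.ofReal_eq_ofReal_iff (by positivity) (by positivity),
    div_left_inj' hP.ne']

lemma image_cyl {β a₁ a₂ : ℝ} (h : Hyp β a₁ a₂) (w : List ℝ) (hw : isWord a₁ a₂ w)
    (hne : w ≠ []) :
    (greedyT β a₁ a₂)^[w.length] '' cyl β a₁ a₂ w = Ico 0 (cw β a₁ a₂ w) := by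
  have hβ : 0 < β := by linarith [h.1]
  have hP : 0 < β ^ w.length := by positivity
  obtain ⟨p, hp, hp2⟩ := good h w hw
  rw [cyl_sub h w hw hne] at hp hp2
  rw [image_congr hp2, hp]
  ext y
  simp only [mem_image, mem_Ico]
  constructor
  · rintro ⟨x, ⟨h1, h2⟩, rfl⟩
    refine ⟨mul_nonneg hP.le (by linarith), ?_⟩
    rw [mul_comm, ← lt_div_iff₀ hP]; linarith
  · rintro ⟨h1, h2⟩
    refine ⟨p + y / β ^ w.length, ⟨?_, ?_⟩, ?_⟩
    · have : 0 ≤ y / β ^ w.length := by positivity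
      linarith
    · gcongr
    · field_simp; ring

noncomputable def Bf (β a₁ a₂ : ℝ) : ℕ → Finset (List ℝ)
  | 0 => {[]}
  | n + 1 => ((Bf β a₁ a₂ n ×ˢ ({0, a₁, a₂} : Finset ℝ)).filter (fun p =>
      0 < stp β a₁ a₂ (cw β a₁ a₂ p.1) p.2 ∧ stp β a₁ a₂ (cw β a₁ a₂ p.1) p.2 ≠ a₁)).image
        (fun p => p.1 ++ [p.2])

lemma pos_of_stp_pos {β a₁ a₂ : ℝ} (h : Hyp β a₁ a₂) {b : ℝ} (hb : AA a₁ a₂ b) {c : ℝ}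
    (hs : 0 < stp β a₁ a₂ c b) : 0 < c := by
  by_contra hc
  have hβ : 0 < β := by linarith [h.1]
  have hl := (uu_le h hb).2.2
  have : stp β a₁ a₂ c b = 0 := by
    apply max_eq_left
    have : min c (uu β a₁ a₂ b) ≤ c := min_le_left _ _
    apply mul_nonpos_of_nonneg_of_nonpos hβ.le
    linarith
  linarith

lemma mem_Bf {β a₁ a₂ : ℝ} (h : Hyp β a₁ a₂) (n : ℕ) (w : List ℝ) : w ∈ Bf β a₁ a₂ n ↔
    w.length = n ∧ isWord a₁ a₂ w ∧ 0 < cw β a₁ a₂ w ∧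
      ∀ w' : List ℝ, w' ≠ [] → w' <+: w → cw β a₁ a₂ w' ≠ a₁ := by
  induction n generalizing w with
  | zero =>
    simp only [Bf, Finset.mem_singleton]
    constructor
    · rintro rfl
      refine ⟨rfl, by simp [isWord], h.2.1, fun w' h1 h2 => ?_⟩
      exact absurd (List.prefix_nil.1 h2) h1
    · rintro ⟨h1, -⟩; exact List.length_eq_zero_iff.1 h1
  | succ n ih =>
    simp only [Bf, Finset.mem_image, Finset.mem_filter, Finset.mem_product, Prod.exists,
      Finset.mem_insert, Finset.mem_singleton]
    constructor
    · rintro ⟨v, b, ⟨⟨hv, hb⟩, hs1, hs2⟩, rfl⟩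
      obtain ⟨k1, k2, k3, k4⟩ := (ih v).1 hv
      refine ⟨by simp [k1], ?_, by rwa [cw_append], ?_⟩
      · intro c hc
        rcases List.mem_append.1 hc with hc | hc
        · exact k2 c hc
        · rw [List.mem_singleton.1 hc]; exact hb
      · intro w' h1 h2
        rcases List.prefix_concat_iff.1 h2 with rfl | h2
        · rwa [cw_append]
        · exact k4 w' h1 h2
    · rintro ⟨k1, k2, k3, k4⟩
      rcases List.eq_nil_or_concat w with rfl | ⟨v, b, rfl⟩
      · simp at k1
      · rw [List.concat_eq_append] at *
        have hb : AA a₁ a₂ b := k2 b (by simp)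
        have q := k4 (v ++ [b]) (by simp) List.prefix_rfl
        rw [cw_append] at k3 q
        refine ⟨v, b, ⟨⟨(ih v).2 ⟨by simpa using k1, fun c hc => k2 c (by simp [hc]),
          pos_of_stp_pos h hb k3, fun w' h1 h2 => k4 w' h1 (h2.trans (List.prefix_append _ _))⟩,
          hb⟩, k3, q⟩, rfl⟩

lemma memB_iff {β a₁ a₂ : ℝ} (h : Hyp β a₁ a₂) (n : ℕ) (w : List ℝ) :
    memB β a₁ a₂ (n + 1) w ↔ w ∈ Bf β a₁ a₂ (n + 1) := by
  have hβ : 0 < β := by linarith [h.1]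
  rw [mem_Bf h, memB]
  refine and_congr_right fun hl => and_congr_right fun hw => ?_
  have hne : w ≠ [] := by rintro rfl; simp at hl
  have hP : 0 < β ^ w.length := by positivity
  rw [vol_cyl h w hw hne, full_iff h w hw hne, ENNReal.ofReal_pos, div_pos_iff_of_pos_right hP]
  refine and_congr_right fun _ => ?_
  have hsub : ∀ w' : List ℝ, w' <+: w → isWord a₁ a₂ w' := fun w' hp b hb =>
    hw b (hp.subset hb)
  constructor
  · rintro ⟨k1, k2⟩ w' h1 h2
    by_cases e : w' = w
    · rwa [e]
    · exact fun q => k2 w' h1 h2 e ((full_iff h w' (hsub w' h2) h1).2 q)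
  · intro k
    refine ⟨k w hne List.prefix_rfl, fun w' h1 h2 _ => ?_⟩
    rw [full_iff h w' (hsub w' h2) h1]; exact k w' h1 h2

lemma sum_AA {β a₁ a₂ : ℝ} (h : Hyp β a₁ a₂) {M : Type*} [AddCommMonoid M] (f : ℝ → M) :
    ∑ b ∈ ({0, a₁, a₂} : Finset ℝ), f b = f 0 + (f a₁ + f a₂) := by
  have h2 := h.2.1
  have h3 := h.2.2.1
  rw [Finset.sum_insert, Finset.sum_insert, Finset.sum_singleton]
  · simp [h3.ne]
  · simp [h2.ne, (h2.trans h3).ne]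

lemma Bf_sum {β a₁ a₂ : ℝ} {M : Type*} [AddCommMonoid M] (g : ℝ → M) (n : ℕ) :
    ∑ w ∈ Bf β a₁ a₂ (n + 1), g (cw β a₁ a₂ w) = ∑ w ∈ Bf β a₁ a₂ n,
      ∑ b ∈ ({0, a₁, a₂} : Finset ℝ), if 0 < stp β a₁ a₂ (cw β a₁ a₂ w) b ∧
        stp β a₁ a₂ (cw β a₁ a₂ w) b ≠ a₁ then g (stp β a₁ a₂ (cw β a₁ a₂ w) b) else 0 := by
  rw [Bf, Finset.sum_image, Finset.sum_filter, Finset.sum_product]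
  · simp only [cw_append]
  · rintro ⟨v, b⟩ _ ⟨v', b'⟩ _ e
    obtain ⟨e1, e2⟩ := List.append_inj' e rfl
    simp_all

lemma stp_vals {β a₁ a₂ : ℝ} (h : Hyp β a₁ a₂) {c : ℝ} (hc0 : 0 < c) (hc : c ≤ a₁) :
    stp β a₁ a₂ c 0 = min (β * c) a₁ ∧
    stp β a₁ a₂ c a₁ = max 0 (min (β * c) a₂ - a₁) ∧
    stp β a₁ a₂ c a₂ = max 0 (β * c - a₂) := by
  obtain ⟨h1, h2, h3, h4, h5, h6⟩ := h
  have hβ : 0 < β := by linarith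
  simp only [stp, uu, h2.ne', (h2.trans h3).ne', h3.ne', if_true, if_false, mul_sub,
    mul_min_of_nonneg _ _ hβ.le, mul_div_cancel₀ _ hβ.ne']
  refine ⟨?_, trivial, ?_⟩
  · rw [sub_zero, max_eq_right]
    exact le_min (by positivity) h2.le
  · rw [min_eq_left (by gcongr)]

lemma key_sum {β a₁ a₂ : ℝ} (h : Hyp β a₁ a₂) {c : ℝ} (hc0 : 0 < c) (hc : c ≤ a₁) :
    ∑ b ∈ ({0, a₁, a₂} : Finset ℝ), (if 0 < stp β a₁ a₂ c b ∧
        stp β a₁ a₂ c b ≠ a₁ then stp β a₁ a₂ c b + a₁ else 0) ≤ (β + 1) / 2 * (c + a₁) := by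
  rw [sum_AA h]
  obtain ⟨e1, e2, e3⟩ := stp_vals h hc0 hc
  rw [e1, e2, e3]
  obtain ⟨h1, h2, h3, h4, h5, h6⟩ := h
  have hβ : 0 < β := by linarith
  have hk : 0 ≤ (β - 1) * (a₁ - c) := mul_nonneg (by linarith) (by linarith)
  have hbc : 0 < β * c := by positivity
  rcases le_or_gt (β * c) a₁ with k | k
  · rw [min_eq_left k, min_eq_left (k.trans h3.le), max_eq_left (by linarith),
      max_eq_left (by linarith)]
    simp only [lt_irrefl, false_and, if_false]
    split_ifs <;> nlinarith
  · rw [min_eq_right k.le]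
    rcases le_or_gt (β * c) a₂ with k2 | k2
    · rw [min_eq_left k2, max_eq_right (by linarith : 0 ≤ β * c - a₁), max_eq_left (by linarith : β * c - a₂ ≤ 0)]
      simp only [lt_irrefl, false_and, if_false, ne_eq, not_true, and_false]
      split_ifs <;> nlinarith
    · rw [min_eq_right k2.le, max_eq_right (by linarith : 0 ≤ a₂ - a₁), max_eq_right (by linarith : 0 ≤ β * c - a₂)]
      simp only [ne_eq, not_true, and_false, if_false]
      split_ifs <;> nlinarith

lemma Bf_bd {β a₁ a₂ : ℝ} (h : Hyp β a₁ a₂) {n : ℕ} {w : List ℝ} (hw : w ∈ Bf β a₁ a₂ n) :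
    0 < cw β a₁ a₂ w ∧ cw β a₁ a₂ w ≤ a₁ := by
  obtain ⟨k1, k2, k3, k4⟩ := (mem_Bf h n w).1 hw
  refine ⟨k3, ?_⟩
  rcases List.eq_nil_or_concat w with rfl | ⟨v, b, rfl⟩
  · exact le_rfl
  · rw [List.concat_eq_append] at *
    rw [cw_append]; exact stp_le h (k2 b (by simp)) _

lemma Bf_growth {β a₁ a₂ : ℝ} (h : Hyp β a₁ a₂) (n : ℕ) :
    ∑ w ∈ Bf β a₁ a₂ n, (cw β a₁ a₂ w + a₁) ≤ ((β + 1) / 2) ^ n * (2 * a₁) := by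
  induction n with
  | zero => simp [Bf, cw]; linarith
  | succ n ih =>
    rw [Bf_sum (fun c => c + a₁)]
    calc _ ≤ ∑ w ∈ Bf β a₁ a₂ n, (β + 1) / 2 * (cw β a₁ a₂ w + a₁) :=
          Finset.sum_le_sum fun w hw => key_sum h (Bf_bd h hw).1 (Bf_bd h hw).2
      _ = (β + 1) / 2 * ∑ w ∈ Bf β a₁ a₂ n, (cw β a₁ a₂ w + a₁) := by rw [Finset.mul_sum]
      _ ≤ (β + 1) / 2 * (((β + 1) / 2) ^ n * (2 * a₁)) := by
          have := h.1
          gcongr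
      _ = _ := by ring

lemma Bf_card {β a₁ a₂ : ℝ} (h : Hyp β a₁ a₂) (n : ℕ) :
    ((Bf β a₁ a₂ n).card : ℝ) ≤ 2 * ((β + 1) / 2) ^ n := by
  have h1 := Bf_growth h n
  have h2 : ∑ w ∈ Bf β a₁ a₂ n, a₁ ≤ ∑ w ∈ Bf β a₁ a₂ n, (cw β a₁ a₂ w + a₁) :=
    Finset.sum_le_sum fun w hw => by linarith [(Bf_bd h hw).1]
  rw [Finset.sum_const, nsmul_eq_mul] at h2
  have := h.2.1
  apply le_of_mul_le_mul_right _ this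
  linarith

lemma meas_T (β a₁ a₂ : ℝ) : Measurable (greedyT β a₁ a₂) := by
  unfold greedyT
  refine Measurable.ite measurableSet_Iio (by fun_prop) (Measurable.ite measurableSet_Iio ?_ ?_)
  all_goals fun_prop

/-- Lebesgue measure on `[0,c)` of the preimage splits over the three branches. -/
lemma branch_vol {β a₁ a₂ : ℝ} (h : Hyp β a₁ a₂) {b : ℝ} (hb : AA a₁ a₂ b) (c : ℝ)
    (E : Set ℝ) :
    volume (greedyT β a₁ a₂ ⁻¹' E ∩ Ico 0 c ∩ digitInt β a₁ a₂ b) =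
      ENNReal.ofReal β⁻¹ * volume (E ∩ Ico 0 (stp β a₁ a₂ c b)) := by
  have hβ : 0 < β := by linarith [h.1]
  have hl := (uu_le h hb).2.2
  have : greedyT β a₁ a₂ ⁻¹' E ∩ Ico 0 c ∩ digitInt β a₁ a₂ b =
      (fun x => β * x) ⁻¹' ((fun x => x + (-b)) ⁻¹' (E ∩ Ico 0 (stp β a₁ a₂ c b))) := by
    ext x
    have key : (x ∈ Ico 0 c ∧ x ∈ Ico (b / β) (uu β a₁ a₂ b)) ↔
        β * x + -b ∈ Ico 0 (stp β a₁ a₂ c b) := by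
      have e : stp β a₁ a₂ c b = max 0 (min (β * c) (β * uu β a₁ a₂ b) - b) := by
        rw [stp, mul_sub, mul_min_of_nonneg _ _ hβ.le, mul_div_cancel₀ _ hβ.ne']
      rw [e]
      simp only [mem_Ico, lt_max_iff, div_le_iff₀ hβ]
      rw [lt_sub_iff_add_lt, neg_add_cancel_right, lt_min_iff, mul_lt_mul_iff_right₀ hβ,
        mul_lt_mul_iff_right₀ hβ]
      constructor
      · rintro ⟨⟨r1, r2⟩, r3, r4⟩; exact ⟨by linarith, Or.inr ⟨r2, r4⟩⟩
      · rintro ⟨r1, r | ⟨r2, r3⟩⟩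
        · linarith
        · refine ⟨⟨?_, r2⟩, by linarith, r3⟩
          have : b / β ≤ x := by rw [div_le_iff₀ hβ]; linarith
          linarith
    rw [mem_preimage, mem_preimage, mem_inter_iff, mem_inter_iff, mem_inter_iff, ← key,
      ← digit_eq h hb, mem_preimage]
    constructor
    · rintro ⟨⟨r1, r2⟩, r3⟩
      rw [T_eq h hb r3] at r1
      exact ⟨r1, r2, r3⟩
    · rintro ⟨r1, r2, r3⟩
      refine ⟨⟨?_, r2⟩, r3⟩
      rw [T_eq h hb r3]; exact r1
  rw [this, Real.volume_preimage_mul_left hβ.ne', abs_of_pos (inv_pos.2 hβ),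
    measure_preimage_add_right]

lemma split_vol {β a₁ a₂ : ℝ} (h : Hyp β a₁ a₂) {c : ℝ} (hc : c ≤ a₁)
    {E : Set ℝ} (hE : MeasurableSet E) :
    volume (greedyT β a₁ a₂ ⁻¹' E ∩ Ico 0 c) = ENNReal.ofReal β⁻¹ *
      ∑ b ∈ ({0, a₁, a₂} : Finset ℝ), volume (E ∩ Ico 0 (stp β a₁ a₂ c b)) := by
  rw [Finset.mul_sum]
  have hA : ∀ b ∈ ({0, a₁, a₂} : Finset ℝ), AA a₁ a₂ b := fun b hb => by
    simpa [AA] using hb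
  rw [← Finset.sum_congr rfl fun b hb => branch_vol h (hA b hb) c E, sum_AA h]
  have h' := h
  obtain ⟨h1, h2, h3, h4, h5, h6⟩ := h'
  have hβ : 0 < β := by linarith
  have d0 : digitInt β a₁ a₂ 0 = Ico 0 (a₁ / β) := by simp [digitInt]
  have d1 : digitInt β a₁ a₂ a₁ = Ico (a₁ / β) (a₂ / β) := by simp [digitInt, h2.ne']
  have d2 : digitInt β a₁ a₂ a₂ = Ico (a₂ / β) a₁ := by
    simp [digitInt, h3.ne', (h2.trans h3).ne']
  have e1 : a₁ / β < a₂ / β := by gcongr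
  have e0 : 0 < a₁ / β := by positivity
  have hm : MeasurableSet (greedyT β a₁ a₂ ⁻¹' E ∩ Ico 0 c) :=
    (meas_T β a₁ a₂ hE).inter measurableSet_Ico
  set S := greedyT β a₁ a₂ ⁻¹' E ∩ Ico 0 c with hS
  rw [← measure_inter_add_sdiff S (measurableSet_Iio : MeasurableSet (Iio (a₁ / β))),
    ← measure_inter_add_sdiff (S \ Iio (a₁ / β)) (measurableSet_Iio : MeasurableSet (Iio (a₂ / β)))]
  rw [d0, d1, d2]
  have hSs : ∀ x ∈ S, 0 ≤ x ∧ x < a₁ := fun x hx => ⟨hx.2.1, hx.2.2.trans_le hc⟩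
  refine congr_arg₂ _ (congr_arg _ ?_) (congr_arg₂ _ (congr_arg _ ?_) ?_)
  · ext x
    simp only [mem_inter_iff, mem_Iio, mem_Ico]
    exact ⟨fun q => ⟨q.1, (hSs x q.1).1, q.2⟩, fun q => ⟨q.1, q.2.2⟩⟩
  · ext x
    simp only [mem_inter_iff, mem_sdiff, mem_Iio, mem_Ico, not_lt]
    tauto
  · congr 1
    ext x
    simp only [mem_inter_iff, mem_sdiff, mem_Iio, mem_Ico, not_lt]
    exact ⟨fun q => ⟨q.1.1, q.2, (hSs x q.1.1).2⟩, fun q => ⟨⟨q.1, e1.le.trans q.2.1⟩, q.2.1⟩⟩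

noncomputable def GG (β a₁ a₂ : ℝ) (n : ℕ) (E : Set ℝ) : ENNReal :=
  ∑ w ∈ Bf β a₁ a₂ n, volume (E ∩ Ico 0 (cw β a₁ a₂ w))

noncomputable def NN (β a₁ a₂ : ℝ) (n : ℕ) : ENNReal :=
  ∑ w ∈ Bf β a₁ a₂ n, ∑ b ∈ ({0, a₁, a₂} : Finset ℝ),
    if stp β a₁ a₂ (cw β a₁ a₂ w) b = a₁ then 1 else 0

lemma GG_rec {β a₁ a₂ : ℝ} (h : Hyp β a₁ a₂) (n : ℕ) {E : Set ℝ} (hE : MeasurableSet E) :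
    GG β a₁ a₂ n (greedyT β a₁ a₂ ⁻¹' E) = ENNReal.ofReal β⁻¹ *
      (GG β a₁ a₂ (n + 1) E + NN β a₁ a₂ n * volume (E ∩ Ico 0 a₁)) := by
  have hp := h.2.1
  unfold GG NN
  rw [Bf_sum (fun c => volume (E ∩ Ico 0 c)), Finset.sum_mul, ← Finset.sum_add_distrib,
    Finset.mul_sum]
  refine Finset.sum_congr rfl fun w hw => ?_
  rw [split_vol h (Bf_bd h hw).2 hE, Finset.sum_mul, ← Finset.sum_add_distrib]
  congr 1
  refine Finset.sum_congr rfl fun b _ => ?_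
  by_cases q : stp β a₁ a₂ (cw β a₁ a₂ w) b = a₁
  · simp [q]
  · rcases (stp_nonneg (β := β) (a₁ := a₁) (a₂ := a₂) (c := cw β a₁ a₂ w) (b := b)).eq_or_lt
      with e | e
    · simp [← e, hp.ne]
    · simp [q, e]

lemma phi_eq {β a₁ a₂ : ℝ} (h : Hyp β a₁ a₂) {x : ℝ} (hx : x ∈ Ico 0 a₁) :
    ENNReal.ofReal (phi β a₁ a₂ x) = ∑' n : ℕ, ∑ w ∈ Bf β a₁ a₂ n,
      (Ico 0 (cw β a₁ a₂ w)).indicator (fun _ => ENNReal.ofReal β⁻¹ ^ n) x := by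
  have hβ : 0 < β := by linarith [h.1]
  set f : ℕ → ℝ := fun n => ∑ w ∈ Bf β a₁ a₂ n,
      (Ico 0 (cw β a₁ a₂ w)).indicator (fun _ => (β ^ n)⁻¹) x with hf
  have hnn : ∀ n, ∀ w ∈ Bf β a₁ a₂ n,
      0 ≤ (Ico 0 (cw β a₁ a₂ w)).indicator (fun _ => (β ^ n)⁻¹) x := fun n w _ =>
    indicator_nonneg (fun _ _ => by positivity) _
  have hf0 : ∀ n, 0 ≤ f n := fun n => Finset.sum_nonneg (hnn n)
  have hfs : Summable f := by
    have h1 := h.1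
    refine Summable.of_nonneg_of_le hf0 (fun n => ?_)
      ((summable_geometric_of_lt_one (r := (β + 1) / 2 / β) (by positivity)
        (by rw [div_lt_one hβ]; linarith)).mul_left 2)
    calc f n ≤ ∑ w ∈ Bf β a₁ a₂ n, (β ^ n)⁻¹ := Finset.sum_le_sum fun w _ =>
          indicator_le_self' (fun _ _ => by positivity) _
      _ = (Bf β a₁ a₂ n).card * (β ^ n)⁻¹ := by rw [Finset.sum_const, nsmul_eq_mul]
      _ ≤ (2 * ((β + 1) / 2) ^ n) * (β ^ n)⁻¹ := by gcongr; exact Bf_card h n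
      _ = _ := by rw [div_pow _ β, mul_assoc, div_eq_mul_inv _ (β ^ n)]
  have hphi : phi β a₁ a₂ x = ∑' n, f n := by
    rw [hfs.tsum_eq_zero_add]
    unfold phi
    congr 1
    · simp [hf, Bf, cw, indicator_of_mem hx]
    · refine tsum_congr fun n => ?_
      simp only [hf]
      rw [← Finset.tsum_subtype (Bf β a₁ a₂ (n + 1))
        (fun w => (Ico 0 (cw β a₁ a₂ w)).indicator (fun _ => (β ^ (n + 1))⁻¹) x),
        ← (Equiv.subtypeEquivRight (memB_iff h n)).tsum_eq]
      refine tsum_congr fun w => ?_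
      have hw := w.2
      have hl : w.1.length = n + 1 := hw.1
      have hne : w.1 ≠ [] := by intro e; simp [e] at hl
      have := image_cyl h w.1 hw.2.1 hne
      rw [hl] at this
      rw [this]; rfl
  rw [hphi, ENNReal.ofReal_tsum_of_nonneg hf0 hfs]
  refine tsum_congr fun n => ?_
  rw [hf, ENNReal.ofReal_sum_of_nonneg (hnn n)]
  refine Finset.sum_congr rfl fun w _ => ?_
  by_cases q : x ∈ Ico 0 (cw β a₁ a₂ w)
  · rw [indicator_of_mem q, indicator_of_mem q, ← inv_pow, ENNReal.ofReal_pow (by positivity)]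
  · rw [indicator_of_notMem q, indicator_of_notMem q, ENNReal.ofReal_zero]

lemma mu_eq {β a₁ a₂ : ℝ} (h : Hyp β a₁ a₂) {E : Set ℝ} (hE : MeasurableSet E) :
    muMeas β a₁ a₂ E = ∑' n : ℕ, ENNReal.ofReal β⁻¹ ^ n * GG β a₁ a₂ n E := by
  rw [muMeas, withDensity_apply _ hE, Measure.restrict_restrict hE]
  rw [setLIntegral_congr_fun (hE.inter measurableSet_Ico) (fun x hx => phi_eq h hx.2)]
  rw [lintegral_tsum]
  · refine tsum_congr fun n => ?_
    rw [lintegral_finsetSum, GG, Finset.mul_sum]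
    · refine Finset.sum_congr rfl fun w hw => ?_
      rw [lintegral_indicator_const measurableSet_Ico, Measure.restrict_apply measurableSet_Ico]
      congr 2
      have := Ico_subset_Ico_right (b := (0:ℝ)) (Bf_bd h hw).2
      ext x
      simp only [mem_inter_iff]
      exact ⟨fun q => ⟨q.2.1, q.1⟩, fun q => ⟨q.2, q.1, this q.2⟩⟩
    · intro w _
      exact measurable_const.indicator measurableSet_Ico
  · intro n
    exact (Finset.measurable_sum _ fun w _ =>
      measurable_const.indicator measurableSet_Ico).aemeasurable

lemma mu_univ {β a₁ a₂ : ℝ} (h : Hyp β a₁ a₂) : muMeas β a₁ a₂ univ < ⊤ := by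
  have hβ : 0 < β := by linarith [h.1]
  have h1 := h.1
  have h2 := h.2.1
  rw [mu_eq h MeasurableSet.univ]
  have hs : Summable fun n : ℕ => 2 * a₁ * ((β + 1) / 2 / β) ^ n :=
    (summable_geometric_of_lt_one (r := (β + 1) / 2 / β) (by positivity)
        (by rw [div_lt_one hβ]; linarith)).mul_left _
  refine lt_of_le_of_lt (ENNReal.tsum_le_tsum fun n => ?_) hs.tsum_ofReal_lt_top
  have e : GG β a₁ a₂ n univ = ENNReal.ofReal (∑ w ∈ Bf β a₁ a₂ n, cw β a₁ a₂ w) := by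
    rw [ENNReal.ofReal_sum_of_nonneg fun w hw => (Bf_bd h hw).1.le]
    simp [GG]
  rw [e, ← ENNReal.ofReal_pow (by positivity), ← ENNReal.ofReal_mul (by positivity)]
  apply ENNReal.ofReal_le_ofReal
  have : ∑ w ∈ Bf β a₁ a₂ n, cw β a₁ a₂ w ≤ ((β + 1) / 2) ^ n * (2 * a₁) :=
    (Finset.sum_le_sum fun w _ => by linarith).trans (Bf_growth h n)
  calc _ ≤ β⁻¹ ^ n * (((β + 1) / 2) ^ n * (2 * a₁)) := by gcongr
    _ = _ := by rw [div_eq_mul_inv _ β, mul_pow]; ring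

lemma mu_succ {β a₁ a₂ : ℝ} (h : Hyp β a₁ a₂) {E : Set ℝ} (hE : MeasurableSet E) :
    muMeas β a₁ a₂ E = volume (E ∩ Ico 0 a₁) +
      ∑' n : ℕ, ENNReal.ofReal β⁻¹ ^ (n + 1) * GG β a₁ a₂ (n + 1) E := by
  rw [mu_eq h hE, tsum_eq_zero_add' ENNReal.summable]
  simp [GG, Bf, cw]

lemma mu_pre {β a₁ a₂ : ℝ} (h : Hyp β a₁ a₂) {E : Set ℝ} (hE : MeasurableSet E) :
    muMeas β a₁ a₂ (greedyT β a₁ a₂ ⁻¹' E) =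
      (∑' n : ℕ, ENNReal.ofReal β⁻¹ ^ (n + 1) * NN β a₁ a₂ n) * volume (E ∩ Ico 0 a₁) +
      ∑' n : ℕ, ENNReal.ofReal β⁻¹ ^ (n + 1) * GG β a₁ a₂ (n + 1) E := by
  rw [mu_eq h (meas_T _ _ _ hE), ← ENNReal.tsum_mul_right, ← ENNReal.tsum_add]
  refine tsum_congr fun n => ?_
  rw [GG_rec h n hE]
  ring

lemma S_eq {β a₁ a₂ : ℝ} (h : Hyp β a₁ a₂) :
    (∑' n : ℕ, ENNReal.ofReal β⁻¹ ^ (n + 1) * NN β a₁ a₂ n) = 1 := by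
  have p := mu_pre h MeasurableSet.univ
  have q := mu_succ h MeasurableSet.univ
  have r := mu_univ h
  rw [preimage_univ, q] at p
  rw [q] at r
  have := (ENNReal.add_left_inj (ENNReal.add_lt_top.1 r).2.ne).1 p
  rw [univ_inter, Real.volume_Ico, sub_zero] at this
  have h2 : ENNReal.ofReal a₁ ≠ 0 := (ENNReal.ofReal_pos.2 h.2.1).ne'
  refine (ENNReal.mul_left_inj h2 ENNReal.ofReal_ne_top).1 ?_
  rw [one_mul, ← this]

/-- `μ` is a finite measure on `[0, a₁)` equivalent to Lebesgue
measure on `[0, a₁)`, and `μ` is invariant under the greedy β-transformation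
`T`: for every Borel `E ⊆ [0, a₁)`, `μ(T⁻¹E) = μ(E)`. -/
theorem stmt12 (β a₁ a₂ : ℝ) (hβ1 : 1 < β) (hβ3 : β < 3)
    (ha₁ : 0 < a₁) (h12 : a₁ < a₂) (hc : condition6 β a₁ a₂) :
    IsFiniteMeasure (muMeas β a₁ a₂) ∧
    (∀ E : Set ℝ, E ⊆ Set.Ico 0 a₁ → MeasurableSet E →
      (muMeas β a₁ a₂ E = 0 ↔ volume E = 0)) ∧
    (∀ E : Set ℝ, E ⊆ Set.Ico 0 a₁ → MeasurableSet E →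
      muMeas β a₁ a₂ (greedyT β a₁ a₂ ⁻¹' E) = muMeas β a₁ a₂ E) := by
  have h : Hyp β a₁ a₂ := by
    obtain ⟨c1, c2⟩ := hc
    have m1 : a₁ * (β - 1) ≤ a₁ * max (β - 1) 1 := by gcongr; exact le_max_left _ _
    have m2 : a₁ * min 2 β ≤ a₁ * 2 := by gcongr; exact min_le_left _ _
    have m3 : a₁ * min 2 β ≤ a₁ * β := by gcongr; exact min_le_right _ _
    exact ⟨hβ1, ha₁, h12, by linarith, by linarith, by linarith⟩
  refine ⟨⟨mu_univ h⟩, fun E hs hE => ?_, fun E hs hE => ?_⟩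
  · constructor
    · intro q
      rw [mu_succ h hE, add_eq_zero, inter_eq_left.2 hs] at q
      exact q.1
    · intro q
      rw [mu_eq h hE, ENNReal.tsum_eq_zero]
      intro n
      rw [GG, Finset.sum_eq_zero, mul_zero]
      intro w _
      exact measure_mono_null inter_subset_left q
  · rw [mu_pre h hE, S_eq h, one_mul, mu_succ h hE]
end

section
/- The greedy β-transformation T is ergodic with respect to the probability measure μ/μ([0, a₁)); i.e. T preserves this probability measure and every Borel set E ⊆ [0, a₁) with T⁻¹E = E has measure 0 or 1. (The paper proves the stronger statement that T is exact, hence mixing of all orders.) -/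
open MeasureTheory Set

namespace GB

noncomputable section

/-- endpoint map: `T(Δ(b) ∩ [0,t)) = [0, step t b)` -/
def step (β a₁ a₂ t b : ℝ) : ℝ :=
  if b = 0 then min (β * t) a₁ else if b = a₁ then max 0 (min (β * t) a₂ - a₁)
  else max 0 (β * t - a₂)

def tau (β a₁ a₂ : ℝ) (w : List ℝ) : ℝ := w.foldl (step β a₁ a₂) a₁

def D (a₁ a₂ : ℝ) : Finset ℝ := {0, a₁, a₂}

/-- the standing hypotheses in usable form -/
structure Hyp (β a₁ a₂ : ℝ) : Prop where
  b1 : 1 < β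
  p1 : 0 < a₁
  l12 : a₁ < a₂
  c1 : β * a₁ - a₁ < a₂
  c2 : a₂ < 2 * a₁
  c3 : a₂ < β * a₁

lemma hyp_of {β a₁ a₂ : ℝ} (hβ1 : 1 < β)
    (ha₁ : 0 < a₁) (h12 : a₁ < a₂) (hc : condition6 β a₁ a₂) : Hyp β a₁ a₂ := by
  obtain ⟨h1, h2⟩ := hc
  have e1 := mul_le_mul_of_nonneg_left (le_max_left (β - 1) 1) ha₁.le
  have e2 := mul_le_mul_of_nonneg_left (min_le_left 2 β) ha₁.le
  have e3 := mul_le_mul_of_nonneg_left (min_le_right 2 β) ha₁.le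
  exact ⟨hβ1, ha₁, h12, by linarith, by linarith, by linarith⟩

variable {β a₁ a₂ : ℝ}

lemma step0 (t : ℝ) : step β a₁ a₂ t 0 = min (β * t) a₁ := by simp [step]
lemma step1 (H : Hyp β a₁ a₂) (t : ℝ) :
    step β a₁ a₂ t a₁ = max 0 (min (β * t) a₂ - a₁) := by simp [step, H.p1.ne']
lemma step2 (H : Hyp β a₁ a₂) (t : ℝ) :
    step β a₁ a₂ t a₂ = max 0 (β * t - a₂) := by
  simp [step, (H.p1.trans H.l12).ne', H.l12.ne']

lemma sumD (H : Hyp β a₁ a₂) (f : ℝ → ℝ) :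
    ∑ b ∈ D a₁ a₂, f b = f 0 + f a₁ + f a₂ := by
  have h1 := H.p1
  have h2 := H.l12
  unfold D
  rw [Finset.sum_insert, Finset.sum_insert, Finset.sum_singleton, add_assoc]
  · simp [h2.ne]
  · simp [h1.ne, (h1.trans h2).ne]

lemma memD (b : ℝ) : b ∈ D a₁ a₂ ↔ b = 0 ∨ b = a₁ ∨ b = a₂ := by simp [D]

lemma step_mem (H : Hyp β a₁ a₂) {t b : ℝ} (ht : t ∈ Icc 0 a₁) (hb : b ∈ D a₁ a₂) :
    step β a₁ a₂ t b ∈ Icc 0 a₁ := by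
  obtain ⟨h1, h2, h3, h4, h5, h6⟩ := H
  have H : Hyp β a₁ a₂ := ⟨h1, h2, h3, h4, h5, h6⟩
  have q : 0 ≤ β * t := mul_nonneg (by linarith) ht.1
  have q2 : β * t ≤ β * a₁ := mul_le_mul_of_nonneg_left ht.2 (by linarith)
  rw [memD] at hb
  rcases hb with rfl | rfl | rfl
  · rw [step0]; exact ⟨le_min q h2.le, min_le_right _ _⟩
  · rw [step1 H]; exact ⟨le_max_left _ _, max_le h2.le (by linarith [min_le_right (β * t) a₂])⟩
  · rw [step2 H]; exact ⟨le_max_left _ _, max_le h2.le (by linarith)⟩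

lemma step_zero (H : Hyp β a₁ a₂) {b : ℝ} (hb : b ∈ D a₁ a₂) :
    step β a₁ a₂ 0 b = 0 := by
  obtain ⟨h1, h2, h3, h4, h5, h6⟩ := H
  have H : Hyp β a₁ a₂ := ⟨h1, h2, h3, h4, h5, h6⟩
  rw [memD] at hb
  rcases hb with rfl | rfl | rfl
  · rw [step0]; simp [h2.le]
  · rw [step1 H]; simp [h2.le, (h2.trans h3).le]
  · rw [step2 H]; simp [(h2.trans h3).le]

/-- on `Δ(b)`, membership in `[0,t)` -/
lemma step_iff (H : Hyp β a₁ a₂) {t b : ℝ} (ht : t ∈ Icc 0 a₁) (hb : b ∈ D a₁ a₂) (x : ℝ) :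
    (x ∈ Ico 0 t ∧ x ∈ digitInt β a₁ a₂ b) ↔ β * x - b ∈ Ico 0 (step β a₁ a₂ t b) := by
  obtain ⟨h1, h2, h3, h4, h5, h6⟩ := H
  have H : Hyp β a₁ a₂ := ⟨h1, h2, h3, h4, h5, h6⟩
  have hβ : 0 < β := by linarith
  have k1 : ∀ y, y < t ↔ β * y < β * t := fun y => (mul_lt_mul_iff_right₀ hβ).symm
  have k2 : ∀ y, y < a₁ ↔ β * y < β * a₁ := fun y => (mul_lt_mul_iff_right₀ hβ).symm
  have k3 : ∀ y, 0 ≤ y ↔ 0 ≤ β * y := fun y => (mul_nonneg_iff_of_pos_left hβ).symm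
  have q2 : β * t ≤ β * a₁ := mul_le_mul_of_nonneg_left ht.2 hβ.le
  rw [memD] at hb
  rcases hb with rfl | rfl | rfl
  · rw [step0]
    simp only [digitInt, if_true, mem_Ico, lt_div_iff₀ hβ, lt_min_iff, k1 x, k3 x, mul_comm x β, sub_zero]
    tauto
  · rw [step1 H]
    simp only [digitInt, if_neg h2.ne', if_true, mem_Ico, lt_div_iff₀ hβ, div_le_iff₀ hβ, lt_max_iff,
      k1 x, k3 x, mul_comm x β, sub_lt_sub_iff_right, lt_min_iff]
    grind
  · rw [step2 H]
    simp only [digitInt, if_neg (h2.trans h3).ne', if_neg h3.ne', mem_Ico, lt_div_iff₀ hβ,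
      div_le_iff₀ hβ, lt_max_iff,
      k1 x, k3 x, k2 x, mul_comm x β, sub_lt_sub_iff_right]
    grind

lemma T_eq (H : Hyp β a₁ a₂) {b : ℝ} (hb : b ∈ D a₁ a₂) {x : ℝ}
    (hx : x ∈ digitInt β a₁ a₂ b) : greedyT β a₁ a₂ x = β * x - b := by
  obtain ⟨h1, h2, h3, h4, h5, h6⟩ := H
  have hβ : 0 < β := by linarith
  have : a₁ / β < a₂ / β := div_lt_div_of_pos_right h3 hβ
  rw [memD] at hb
  rcases hb with rfl | rfl | rfl
  · simp only [digitInt, if_true, mem_Ico] at hx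
    simp [greedyT, hx.2]
  · simp only [digitInt, if_neg h2.ne', if_true, mem_Ico] at hx
    simp [greedyT, hx.2, hx.1.not_gt]
  · simp only [digitInt, if_neg (h2.trans h3).ne', if_neg h3.ne', mem_Ico] at hx
    simp [greedyT, hx.1.not_gt, (this.le.trans hx.1).not_gt]

lemma digit_sub (H : Hyp β a₁ a₂) {b : ℝ} (hb : b ∈ D a₁ a₂) {x : ℝ}
    (hx : x ∈ digitInt β a₁ a₂ b) : x ∈ Ico 0 a₁ := by
  obtain ⟨h1, h2, h3, h4, h5, h6⟩ := H
  have hβ : 0 < β := by linarith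
  have e1 : 0 < a₁ / β := div_pos h2 hβ
  have e2 : a₁ / β < a₂ / β := div_lt_div_of_pos_right h3 hβ
  have e3 : a₂ / β < a₁ := by rw [div_lt_iff₀ hβ]; linarith
  rw [memD] at hb
  rcases hb with rfl | rfl | rfl
  · simp only [digitInt, if_true, mem_Ico] at hx ⊢
    constructor <;> linarith
  · simp only [digitInt, if_neg h2.ne', if_true, mem_Ico] at hx ⊢
    constructor <;> linarith
  · simp only [digitInt, if_neg (h2.trans h3).ne', if_neg h3.ne', mem_Ico] at hx ⊢
    constructor <;> linarith

/-- the Lyapunov inequality -/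
lemma child_ineq (H : Hyp β a₁ a₂) {t : ℝ} (ht : t ∈ Icc 0 a₁) :
    ∑ b ∈ D a₁ a₂, (if 0 < step β a₁ a₂ t b ∧ step β a₁ a₂ t b < a₁ then
      (1 + step β a₁ a₂ t b / a₁) else 0) ≤ β * (1 + t / a₁) - (β - 1) := by
  have hrw : ∀ s : ℝ, 1 + s / a₁ = (a₁ + s) / a₁ := fun s => by
    have := H.p1.ne'
    field_simp
  rw [sumD H, step0, step1 H, step2 H]
  obtain ⟨h1, h2, h3, h4, h5, h6⟩ := H
  have q : 0 ≤ β * t := mul_nonneg (by linarith) ht.1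
  have q2 : β * t ≤ β * a₁ := mul_le_mul_of_nonneg_left ht.2 (by linarith)
  have e : β * (1 + t / a₁) - (β - 1) = (a₁ + β * t) / a₁ := by field_simp; ring
  rw [e]
  simp only [hrw]
  generalize β * t = y at *
  have fin : ∀ A B C : ℝ, A + B + C ≤ a₁ + y → A / a₁ + B / a₁ + C / a₁ ≤ (a₁ + y) / a₁ := by
    intro A B C h
    rw [← add_div, ← add_div]
    exact div_le_div_of_nonneg_right h h2.le
  have ii : ∀ (p : Prop) [Decidable p] (A : ℝ), (if p then A / a₁ else 0) = (if p then A else 0) / a₁ := by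
    intro p _ A; split_ifs <;> simp
  simp only [ii]
  apply fin
  rcases le_total y a₁ with c | c
  · rw [min_eq_left c, min_eq_left (by linarith), max_eq_left (by linarith), max_eq_left (by linarith)]
    simp only [lt_irrefl, false_and, if_false]
    split_ifs <;> linarith
  · rw [min_eq_right c]
    rcases le_total y a₂ with d | d
    · rw [min_eq_left d, max_eq_right (by linarith), max_eq_left (by linarith)]
      simp only [lt_irrefl, false_and, and_false, if_false]
      split_ifs <;> linarith
    · rw [min_eq_right d, max_eq_right (by linarith), max_eq_right (by linarith)]
      simp only [lt_irrefl, and_false, if_false]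
      split_ifs <;> linarith

lemma sum_step (H : Hyp β a₁ a₂) {t : ℝ} (ht : t ∈ Icc 0 a₁) :
    ∑ b ∈ D a₁ a₂, step β a₁ a₂ t b = β * t := by
  rw [sumD H, step0, step1 H, step2 H]
  obtain ⟨h1, h2, h3, h4, h5, h6⟩ := H
  generalize β * t = y at *
  rcases le_total y a₁ with c | c
  · rw [min_eq_left c, min_eq_left (by linarith), max_eq_left (by linarith), max_eq_left (by linarith)]
    ring
  · rw [min_eq_right c]
    rcases le_total y a₂ with d | d
    · rw [min_eq_left d, max_eq_right (by linarith), max_eq_left (by linarith)]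
      ring
    · rw [min_eq_right d, max_eq_right (by linarith), max_eq_right (by linarith)]
      ring

/-- measure of `E ∩ [0,t)` -/
def m (E : Set ℝ) (t : ℝ) : ℝ := (volume (E ∩ Ico 0 t)).toReal

lemma m_fin (E : Set ℝ) (t : ℝ) : volume (E ∩ Ico 0 t) ≠ ⊤ :=
  ne_top_of_le_ne_top (by simp) (measure_mono (inter_subset_right : E ∩ Ico 0 t ⊆ Ico 0 t))

lemma m_nonneg (E : Set ℝ) (t : ℝ) : 0 ≤ m E t := ENNReal.toReal_nonneg
lemma m_le (E : Set ℝ) {t : ℝ} (ht : 0 ≤ t) : m E t ≤ t := by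
  have := ENNReal.toReal_mono (by simp) (measure_mono (μ := volume) (inter_subset_right : E ∩ Ico 0 t ⊆ Ico 0 t))
  simpa [m, ht] using this
lemma m_zero (E : Set ℝ) : m E 0 = 0 := by simp [m]

lemma measT : Measurable (greedyT β a₁ a₂) := by
  unfold greedyT
  refine Measurable.ite (measurableSet_lt measurable_id measurable_const) (by fun_prop) ?_
  exact Measurable.ite (measurableSet_lt measurable_id measurable_const) (by fun_prop) (by fun_prop)

lemma vol_aff {β : ℝ} (hβ : 0 < β) (b : ℝ) (S : Set ℝ) :
    volume ((fun x : ℝ => β * x - b) ⁻¹' S) = ENNReal.ofReal β⁻¹ * volume S := by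
  have : (fun x : ℝ => β * x - b) ⁻¹' S = (fun x => β * x) ⁻¹' ((fun y => y + (-b)) ⁻¹' S) := rfl
  rw [this, Real.volume_preimage_mul_left hβ.ne', measure_preimage_add_right, abs_of_pos (inv_pos.2 hβ)]

lemma meas_digit (b : ℝ) : MeasurableSet (digitInt β a₁ a₂ b) := by
  unfold digitInt
  split_ifs <;> exact measurableSet_Ico

lemma digit_cover (H : Hyp β a₁ a₂) {x : ℝ} (hx : x ∈ Ico 0 a₁) :
    ∃ b ∈ D a₁ a₂, x ∈ digitInt β a₁ a₂ b := by
  obtain ⟨h1, h2, h3, h4, h5, h6⟩ := H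
  by_cases c : x < a₁ / β
  · exact ⟨0, by simp [D], by simp [digitInt, c, hx.1]⟩
  by_cases d : x < a₂ / β
  · exact ⟨a₁, by simp [D], by simp [digitInt, d, h2.ne', not_lt.1 c]⟩
  · exact ⟨a₂, by simp [D], by simp [digitInt, h3.ne', (h2.trans h3).ne', not_lt.1 d, hx.2]⟩

lemma digit_disj (H : Hyp β a₁ a₂) :
    (D a₁ a₂ : Set ℝ).PairwiseDisjoint (digitInt β a₁ a₂) := by
  obtain ⟨h1, h2, h3, h4, h5, h6⟩ := H
  have hβ : 0 < β := by linarith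
  have e2 : a₁ / β < a₂ / β := div_lt_div_of_pos_right h3 hβ
  intro b hb c hc hbc
  rw [Function.onFun, Set.disjoint_left]
  simp only [Finset.mem_coe, memD] at hb hc
  intro x
  have n1 := h2.ne'
  have n2 := h3.ne'
  have n3 := (h2.trans h3).ne'
  rcases hb with rfl | rfl | rfl <;> rcases hc with rfl | rfl | rfl <;>
    simp_all [digitInt] <;> intros <;> linarith

lemma m_rec (H : Hyp β a₁ a₂) {E : Set ℝ} (hE : MeasurableSet E) {t : ℝ} (ht : t ∈ Icc 0 a₁) :
    m (greedyT β a₁ a₂ ⁻¹' E) t = β⁻¹ * ∑ b ∈ D a₁ a₂, m E (step β a₁ a₂ t b) := by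
  have hβ : 0 < β := by linarith [H.b1]
  have piece : ∀ b ∈ D a₁ a₂, greedyT β a₁ a₂ ⁻¹' E ∩ Ico 0 t ∩ digitInt β a₁ a₂ b =
      (fun x : ℝ => β * x - b) ⁻¹' (E ∩ Ico 0 (step β a₁ a₂ t b)) := by
    intro b hb
    ext x
    have k := step_iff H ht hb x
    simp only [mem_inter_iff, mem_preimage]
    constructor
    · rintro ⟨⟨e1, e2⟩, e3⟩
      rw [T_eq H hb e3] at e1
      exact ⟨e1, k.1 ⟨e2, e3⟩⟩
    · rintro ⟨e1, e2⟩
      obtain ⟨e3, e4⟩ := k.2 e2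
      rw [T_eq H hb e4]
      exact ⟨⟨e1, e3⟩, e4⟩
  have un : greedyT β a₁ a₂ ⁻¹' E ∩ Ico 0 t = ⋃ b ∈ D a₁ a₂,
      (greedyT β a₁ a₂ ⁻¹' E ∩ Ico 0 t ∩ digitInt β a₁ a₂ b) := by
    ext x
    simp only [mem_iUnion, exists_prop]
    constructor
    · intro hx
      obtain ⟨b, hb, hxb⟩ := digit_cover H (x := x) ⟨hx.2.1, hx.2.2.trans_le ht.2⟩
      exact ⟨b, hb, hx, hxb⟩
    · rintro ⟨b, _, hx, _⟩
      exact hx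
  unfold m
  rw [un, measure_biUnion_finset, ENNReal.toReal_sum, Finset.mul_sum]
  · refine Finset.sum_congr rfl fun b hb => ?_
    rw [piece b hb, vol_aff hβ, ENNReal.toReal_mul, ENNReal.toReal_ofReal (inv_pos.2 hβ).le]
  · intro b _
    exact ne_top_of_le_ne_top (m_fin _ t) (measure_mono inter_subset_left)
  · intro b hb c hc hbc
    exact (digit_disj H hb hc hbc).mono inter_subset_right inter_subset_right
  · intro b _
    exact ((measT hE).inter measurableSet_Ico).inter (meas_digit b)

lemma T_maps (H : Hyp β a₁ a₂) {x : ℝ} (hx : x ∈ Ico 0 a₁) : greedyT β a₁ a₂ x ∈ Ico 0 a₁ := by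
  obtain ⟨b, hb, hxb⟩ := digit_cover H hx
  rw [T_eq H hb hxb]
  have := (step_iff H (t := a₁) ⟨H.p1.le, le_rfl⟩ hb x).1 ⟨hx, hxb⟩
  exact ⟨this.1, this.2.trans_le (step_mem H ⟨H.p1.le, le_rfl⟩ hb).2⟩

/-- invariant sets: the linear law -/
lemma m_lin (H : Hyp β a₁ a₂) {E : Set ℝ} (hE : MeasurableSet E)
    (hinv : greedyT β a₁ a₂ ⁻¹' E ∩ Ico 0 a₁ = E) {t : ℝ} (ht : t ∈ Icc 0 a₁) :
    m E t = m E a₁ / a₁ * t := by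
  have h1 := H.b1
  have hβ : 0 < β := by linarith
  have h2 := H.p1
  set c := m E a₁ / a₁ with hc
  have hc0 : 0 ≤ c := div_nonneg (m_nonneg _ _) h2.le
  have hc1 : c ≤ 1 := (div_le_one h2).2 (m_le E h2.le)
  have hrec : ∀ s ∈ Icc 0 a₁, m E s = β⁻¹ * ∑ b ∈ D a₁ a₂, m E (step β a₁ a₂ s b) := by
    intro s hs
    rw [← m_rec H hE hs]
    unfold m
    congr 2
    nth_rewrite 1 [← hinv]
    ext x
    simp only [mem_inter_iff]
    exact ⟨fun ⟨⟨e1, _⟩, e2⟩ => ⟨e1, e2⟩, fun ⟨e1, e2⟩ => ⟨⟨e1, e2.1, e2.2.trans_le hs.2⟩, e2⟩⟩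
  set θ : ℝ := 1 - (β - 1) / (2 * β) with hθ
  have hθ0 : 0 ≤ θ := by
    rw [hθ, sub_nonneg, div_le_one (by linarith)]; linarith
  have hθ1 : θ < 1 := by
    have : 0 < (β - 1) / (2 * β) := div_pos (by linarith) (by linarith)
    linarith
  have key : ∀ n : ℕ, ∀ s ∈ Icc 0 a₁, |m E s - c * s| ≤ a₁ * θ ^ n * (1 + s / a₁) := by
    intro n
    induction n with
    | zero =>
      intro s hs
      have q1 := m_nonneg E s
      have q2 := m_le E hs.1
      have q3 : c * s ≤ 1 * s := mul_le_mul_of_nonneg_right hc1 hs.1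
      have q4 : 0 ≤ c * s := mul_nonneg hc0 hs.1
      have : a₁ * θ ^ 0 * (1 + s / a₁) = a₁ + s := by field_simp
      rw [this, abs_le]
      constructor <;> linarith [hs.1, hs.2]
    | succ n ih =>
      intro s hs
      have e1 : m E s - c * s = β⁻¹ * ∑ b ∈ D a₁ a₂,
          (m E (step β a₁ a₂ s b) - c * step β a₁ a₂ s b) := by
        rw [Finset.sum_sub_distrib, ← Finset.mul_sum, sum_step H hs, hrec s hs]
        field_simp
      have e2 : |∑ b ∈ D a₁ a₂, (m E (step β a₁ a₂ s b) - c * step β a₁ a₂ s b)| ≤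
          a₁ * θ ^ n * (β * (1 + s / a₁) - (β - 1)) := by
        refine (Finset.abs_sum_le_sum_abs _ _).trans ?_
        refine le_trans ?_ (mul_le_mul_of_nonneg_left (child_ineq H hs) (by positivity))
        rw [Finset.mul_sum]
        refine Finset.sum_le_sum fun b hb => ?_
        have hm := step_mem H hs hb
        split_ifs with hh
        · exact ih _ hm
        · rw [not_and_or, not_lt, not_lt] at hh
          rcases hh with hh | hh
          · rw [le_antisymm hh hm.1, m_zero]; simp
          · rw [le_antisymm hm.2 hh, hc, div_mul_cancel₀ _ h2.ne']; simp
      rw [e1, abs_mul, abs_of_pos (inv_pos.2 hβ), inv_mul_le_iff₀ hβ]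
      refine e2.trans ?_
      have e3 : β * (1 + s / a₁) - (β - 1) ≤ β * (θ * (1 + s / a₁)) := by
        have : β * (θ * (1 + s / a₁)) = β * (1 + s / a₁) - (β - 1) * ((1 + s / a₁) / 2) := by
          rw [hθ]; field_simp
        rw [this]
        have : s / a₁ ≤ 1 := (div_le_one h2).2 hs.2
        nlinarith
      calc _ ≤ a₁ * θ ^ n * (β * (θ * (1 + s / a₁))) :=
            mul_le_mul_of_nonneg_left e3 (by positivity)
        _ = _ := by ring
  have lim : Filter.Tendsto (fun n : ℕ => a₁ * θ ^ n * (1 + t / a₁)) Filter.atTop (nhds 0) := by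
    have := ((tendsto_pow_atTop_nhds_zero_of_lt_one hθ0 hθ1).const_mul a₁).mul_const (1 + t / a₁)
    simpa using this
  have := ge_of_tendsto' lim (fun n => key n t ht)
  linarith [abs_nonpos_iff.1 this]

lemma ergodic_vol (H : Hyp β a₁ a₂) {E : Set ℝ} (hE : MeasurableSet E) (hs : E ⊆ Ico 0 a₁)
    (hinv : greedyT β a₁ a₂ ⁻¹' E ∩ Ico 0 a₁ = E) :
    volume E = 0 ∨ volume (Ico 0 a₁ \ E) = 0 := by
  have h2 := H.p1
  set c := m E a₁ / a₁ with hc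
  have hc0 : 0 ≤ c := div_nonneg (m_nonneg _ _) h2.le
  have vE : volume E = ENNReal.ofReal (m E a₁) := by
    rw [m, ENNReal.ofReal_toReal (m_fin _ _), inter_eq_left.2 hs]
  have hv : ∀ t ∈ Icc 0 a₁, volume (E ∩ Ico 0 t) = ENNReal.ofReal (c * t) := by
    intro t ht
    rw [← m_lin H hE hinv ht, m, ENNReal.ofReal_toReal (m_fin _ _)]
  have hmeas : volume.restrict E = ENNReal.ofReal c • volume.restrict (Ico 0 a₁) := by
    have : IsFiniteMeasure (volume.restrict E) := ⟨by
      rw [Measure.restrict_apply_univ, vE]; exact ENNReal.ofReal_lt_top⟩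
    refine Measure.ext_of_Iic _ _ fun t => ?_
    rw [Measure.smul_apply, ← measure_congr (Iio_ae_eq_Iic (μ := volume.restrict E)),
      ← measure_congr (Iio_ae_eq_Iic (μ := volume.restrict (Ico 0 a₁))), Measure.restrict_apply measurableSet_Iio,
      Measure.restrict_apply measurableSet_Iio, smul_eq_mul]
    have e1 : Iio t ∩ E = E ∩ Ico 0 (max 0 (min t a₁)) := by
      ext x
      simp only [mem_inter_iff, mem_Iio, mem_Ico, lt_max_iff, lt_min_iff]
      constructor
      · rintro ⟨q1, q2⟩
        have := hs q2
        exact ⟨q2, this.1, Or.inr ⟨q1, this.2⟩⟩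
      · rintro ⟨q1, q2, q3⟩
        exact ⟨by rcases q3 with q | q; exact absurd q2 (not_le.2 q); exact q.1, q1⟩
    have e2 : Iio t ∩ Ico 0 a₁ = Ico 0 (max 0 (min t a₁)) := by
      ext x
      simp only [mem_inter_iff, mem_Iio, mem_Ico, lt_max_iff, lt_min_iff]
      constructor
      · rintro ⟨q1, q2, q3⟩
        exact ⟨q2, Or.inr ⟨q1, q3⟩⟩
      · rintro ⟨q2, q3⟩
        rcases q3 with q | q
        · exact absurd q2 (not_le.2 q)
        · exact ⟨q.1, q2, q.2⟩
    rw [e1, e2, hv _ ⟨le_max_left _ _, max_le h2.le (min_le_right _ _)⟩, Real.volume_Ico, sub_zero,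
      ENNReal.ofReal_mul hc0]
  have := congrArg (fun ν => ν (Ico 0 a₁ \ E)) hmeas
  simp only [Measure.smul_apply, smul_eq_mul] at this
  rw [Measure.restrict_apply (measurableSet_Ico.diff hE),
    Measure.restrict_apply (measurableSet_Ico.diff hE)] at this
  rw [sdiff_inter_self, measure_empty, inter_eq_left.2 sdiff_subset] at this
  rcases mul_eq_zero.1 this.symm with q | q
  · left
    rw [vE]
    have : c ≤ 0 := ENNReal.ofReal_eq_zero.1 q
    have c0 : c = 0 := le_antisymm this hc0
    have : m E a₁ = 0 := by
      rcases div_eq_zero_iff.1 c0 with q | q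
      · exact q
      · exact absurd q h2.ne'
    simp [this]
  · exact Or.inr q

lemma tau_concat (w : List ℝ) (b : ℝ) :
    tau β a₁ a₂ (w ++ [b]) = step β a₁ a₂ (tau β a₁ a₂ w) b := by simp [tau]

lemma isWord_concat (w : List ℝ) (b : ℝ) :
    isWord a₁ a₂ (w ++ [b]) ↔ isWord a₁ a₂ w ∧ b ∈ D a₁ a₂ := by
  simp only [isWord, memD, List.mem_append, List.mem_singleton]
  constructor
  · intro h
    exact ⟨fun c hc => h c (Or.inl hc), h b (Or.inr rfl)⟩
  · rintro ⟨h1, h2⟩ c (hc | rfl)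
    · exact h1 c hc
    · exact h2

lemma tau_mem (H : Hyp β a₁ a₂) (w : List ℝ) (hw : isWord a₁ a₂ w) :
    tau β a₁ a₂ w ∈ Icc 0 a₁ := by
  induction w using List.reverseRecOn with
  | nil => exact ⟨H.p1.le, le_rfl⟩
  | append_singleton w b ih =>
    rw [isWord_concat] at hw
    rw [tau_concat]
    exact step_mem H (ih hw.1) hw.2

lemma cyl_concat (w : List ℝ) (b x : ℝ) :
    x ∈ cyl β a₁ a₂ (w ++ [b]) ↔ x ∈ cyl β a₁ a₂ w ∧
      (greedyT β a₁ a₂)^[w.length] x ∈ digitInt β a₁ a₂ b := by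
  simp only [cyl, mem_iInter, Finset.mem_range, List.length_append, List.length_singleton,
    mem_preimage]
  constructor
  · intro h
    refine ⟨fun k hk => ?_, ?_⟩
    · have := h k (by omega)
      rwa [List.getD_append _ _ _ _ hk] at this
    · have := h w.length (by omega)
      rwa [List.getD_append_right _ _ _ _ le_rfl, Nat.sub_self, List.getD_cons_zero] at this
  · rintro ⟨h1, h2⟩ k hk
    rcases Nat.lt_or_ge k w.length with q | q
    · rw [List.getD_append _ _ _ _ q]
      exact h1 k q
    · have : k = w.length := by omega
      subst this
      rwa [List.getD_append_right _ _ _ _ le_rfl, Nat.sub_self, List.getD_cons_zero]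

lemma cyl_struct (H : Hyp β a₁ a₂) (w : List ℝ) (hw : isWord a₁ a₂ w) :
    ∃ p : ℝ, ∀ x, ((x ∈ cyl β a₁ a₂ w ∧ x ∈ Ico 0 a₁) ↔
      β ^ w.length * x - p ∈ Ico 0 (tau β a₁ a₂ w)) ∧
      (x ∈ cyl β a₁ a₂ w ∧ x ∈ Ico 0 a₁ →
        (greedyT β a₁ a₂)^[w.length] x = β ^ w.length * x - p) := by
  induction w using List.reverseRecOn with
  | nil => exact ⟨0, fun x => by simp [cyl, tau]⟩
  | append_singleton w b ih =>
    rw [isWord_concat] at hw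
    obtain ⟨p, hp⟩ := ih hw.1
    refine ⟨β * p + b, fun x => ?_⟩
    obtain ⟨i1, i2⟩ := hp x
    have k := step_iff H (tau_mem H w hw.1) hw.2 (β ^ w.length * x - p)
    have e : β ^ (w ++ [b]).length * x - (β * p + b) = β * (β ^ w.length * x - p) - b := by
      simp only [List.length_append, List.length_singleton]; ring
    rw [e, tau_concat, cyl_concat, ← k, ← i1]
    constructor
    · constructor
      · rintro ⟨⟨q1, q2⟩, q3⟩
        rw [i2 ⟨q1, q3⟩] at q2
        exact ⟨⟨q1, q3⟩, q2⟩
      · rintro ⟨⟨q1, q3⟩, q2⟩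
        rw [← i2 ⟨q1, q3⟩] at q2
        exact ⟨⟨q1, q2⟩, q3⟩
    · rintro ⟨⟨q1, q2⟩, q3⟩
      rw [List.length_append, List.length_singleton, Function.iterate_succ_apply', T_eq H hw.2 q2,
        i2 ⟨q1, q3⟩]

lemma cyl_sub (H : Hyp β a₁ a₂) (w : List ℝ) (hw : isWord a₁ a₂ w) (hne : w ≠ []) :
    cyl β a₁ a₂ w ⊆ Ico 0 a₁ := by
  intro x hx
  cases w with
  | nil => exact absurd rfl hne
  | cons b w =>
    simp only [cyl, mem_iInter, Finset.mem_range] at hx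
    have := hx 0 (by simp)
    exact digit_sub H ((memD b).2 (hw b (by simp))) (by simpa using this)

lemma cyl_eq (H : Hyp β a₁ a₂) (w : List ℝ) (hw : isWord a₁ a₂ w) (hne : w ≠ []) :
    ∃ p : ℝ, cyl β a₁ a₂ w = (fun x => β ^ w.length * x - p) ⁻¹' (Ico 0 (tau β a₁ a₂ w)) ∧
     ∀ x ∈ cyl β a₁ a₂ w, (greedyT β a₁ a₂)^[w.length] x = β ^ w.length * x - p := by
  obtain ⟨p, hp⟩ := cyl_struct H w hw
  have hs := cyl_sub H w hw hne
  refine ⟨p, ?_, fun x hx => (hp x).2 ⟨hx, hs hx⟩⟩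
  ext x
  rw [mem_preimage, ← (hp x).1]
  exact ⟨fun hx => ⟨hx, hs hx⟩, fun hx => hx.1⟩

lemma cyl_vol (H : Hyp β a₁ a₂) (w : List ℝ) (hw : isWord a₁ a₂ w) (hne : w ≠ []) :
    volume (cyl β a₁ a₂ w) = ENNReal.ofReal (tau β a₁ a₂ w / β ^ w.length) := by
  obtain ⟨p, hp, _⟩ := cyl_eq H w hw hne
  have hβ : 0 < β ^ w.length := pow_pos (by linarith [H.b1]) _
  rw [hp, vol_aff hβ, Real.volume_Ico, sub_zero, ← ENNReal.ofReal_mul (inv_pos.2 hβ).le,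
    div_eq_inv_mul]

lemma cyl_image (H : Hyp β a₁ a₂) (w : List ℝ) (hw : isWord a₁ a₂ w) (hne : w ≠ []) :
    (greedyT β a₁ a₂)^[w.length] '' cyl β a₁ a₂ w = Ico 0 (tau β a₁ a₂ w) := by
  obtain ⟨p, hp, hT⟩ := cyl_eq H w hw hne
  have hβ : 0 < β ^ w.length := pow_pos (by linarith [H.b1]) _
  ext y
  constructor
  · rintro ⟨x, hx, rfl⟩
    rw [hT x hx]
    rw [hp] at hx
    exact hx
  · intro hy
    have e : β ^ w.length * ((y + p) / β ^ w.length) - p = y := by field_simp; ring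
    have hx : (y + p) / β ^ w.length ∈ cyl β a₁ a₂ w := by
      rw [hp, mem_preimage, e]; exact hy
    exact ⟨_, hx, by rw [hT _ hx, e]⟩

lemma full_iff (H : Hyp β a₁ a₂) (w : List ℝ) (hw : isWord a₁ a₂ w) (hne : w ≠ []) :
    isFull β a₁ a₂ w ↔ tau β a₁ a₂ w = a₁ := by
  have hβ : 0 < β ^ w.length := pow_pos (by linarith [H.b1]) _
  rw [isFull, cyl_vol H w hw hne, ENNReal.ofReal_eq_ofReal_iff
    (div_nonneg (tau_mem H w hw).1 hβ.le) (div_nonneg H.p1.le hβ.le)]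
  exact div_left_inj' (ne_of_gt hβ)

/-- the words of `B_n`, built recursively (`S 0 = {[]}`) -/
def S (β a₁ a₂ : ℝ) : ℕ → Finset (List ℝ)
  | 0 => {[]}
  | n + 1 => ((S β a₁ a₂ n ×ˢ D a₁ a₂).image (fun q => q.1 ++ [q.2])).filter
      (fun w => 0 < tau β a₁ a₂ w ∧ tau β a₁ a₂ w < a₁)

lemma mem_S_succ (n : ℕ) (w : List ℝ) (b : ℝ) : w ++ [b] ∈ S β a₁ a₂ (n + 1) ↔
    (w ∈ S β a₁ a₂ n ∧ b ∈ D a₁ a₂) ∧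
      (0 < tau β a₁ a₂ (w ++ [b]) ∧ tau β a₁ a₂ (w ++ [b]) < a₁) := by
  rw [S, Finset.mem_filter, Finset.mem_image]
  apply and_congr_left'
  constructor
  · rintro ⟨⟨u, c⟩, hq, e⟩
    rw [Finset.mem_product] at hq
    obtain ⟨e1, e2⟩ := List.append_inj' e rfl
    simp only [List.cons.injEq, and_true] at e2
    simp only at e1 hq
    rw [← e1, ← e2]; exact hq
  · intro h
    exact ⟨(w, b), Finset.mem_product.2 h, rfl⟩

lemma S_spec (H : Hyp β a₁ a₂) (n : ℕ) (w : List ℝ) : w ∈ S β a₁ a₂ n ↔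
    (w.length = n ∧ isWord a₁ a₂ w ∧ 0 < tau β a₁ a₂ w ∧
      ∀ w' : List ℝ, w' ≠ [] → w' <+: w → tau β a₁ a₂ w' < a₁) := by
  induction w using List.reverseRecOn generalizing n with
  | nil =>
    cases n with
    | zero =>
      simp only [S, Finset.mem_singleton, List.length_nil, true_and, true_iff]
      refine ⟨fun b hb => absurd hb (by simp), H.p1, fun w' h1 h2 => ?_⟩
      exact absurd (List.prefix_nil.1 h2) h1
    | succ n =>
      simp [S]
  | append_singleton w b ih =>
    cases n with
    | zero => simp [S]
    | succ n =>
      rw [mem_S_succ, ih, isWord_concat]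
      simp only [List.prefix_concat_iff, List.length_append, List.length_singleton]
      constructor
      · rintro ⟨⟨⟨q1, q2, q3, q4⟩, q5⟩, q6, q7⟩
        refine ⟨by omega, ⟨q2, q5⟩, q6, ?_⟩
        rintro w' h1 (rfl | h2)
        · exact q7
        · exact q4 w' h1 h2
      · rintro ⟨q1, ⟨q2, q5⟩, q6, q7⟩
        refine ⟨⟨⟨by omega, q2, ?_, fun w' h1 h2 => q7 w' h1 (Or.inr h2)⟩, q5⟩, q6,
          q7 _ (by simp) (Or.inl rfl)⟩
        by_contra hcon
        have : tau β a₁ a₂ w = 0 := le_antisymm (not_lt.1 hcon) (tau_mem H w q2).1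
        rw [tau_concat, this, step_zero H q5] at q6
        exact lt_irrefl _ q6

lemma isWord_of_pre {w' w : List ℝ} (h : w' <+: w) (hw : isWord a₁ a₂ w) : isWord a₁ a₂ w' :=
  fun b hb => hw b (h.subset hb)

lemma memB_iff (H : Hyp β a₁ a₂) (n : ℕ) (w : List ℝ) :
    memB β a₁ a₂ (n + 1) w ↔ w ∈ S β a₁ a₂ (n + 1) := by
  rw [S_spec H, memB]
  apply and_congr_right
  intro hl
  apply and_congr_right
  intro hw
  have hne : w ≠ [] := by rintro rfl; simp at hl
  have hβ : 0 < β ^ w.length := pow_pos (by linarith [H.b1]) _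
  rw [cyl_vol H w hw hne, ENNReal.ofReal_pos, div_pos_iff_of_pos_right hβ]
  apply and_congr_right
  intro _
  constructor
  · rintro ⟨h1, h2⟩ w' h3 h4
    have hw' := isWord_of_pre h4 hw
    refine lt_of_le_of_ne (tau_mem H w' hw').2 ?_
    rw [Ne, ← full_iff H w' hw' h3]
    by_cases e : w' = w
    · rw [e]; exact h1
    · exact h2 w' h3 h4 e
  · intro h
    refine ⟨?_, fun w' h3 h4 _ => ?_⟩
    · rw [full_iff H w hw hne]; exact (h w hne (List.prefix_refl w)).ne
    · rw [full_iff H w' (isWord_of_pre h4 hw) h3]; exact (h w' h3 h4).ne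

lemma S_tau (H : Hyp β a₁ a₂) {n : ℕ} {w : List ℝ} (hw : w ∈ S β a₁ a₂ n) :
    tau β a₁ a₂ w ∈ Icc 0 a₁ := tau_mem H w ((S_spec H n w).1 hw).2.1

lemma sum_S_succ (n : ℕ) (f : ℝ → ℝ) :
    ∑ w ∈ S β a₁ a₂ (n + 1), f (tau β a₁ a₂ w) = ∑ w ∈ S β a₁ a₂ n, ∑ b ∈ D a₁ a₂,
      (if 0 < step β a₁ a₂ (tau β a₁ a₂ w) b ∧ step β a₁ a₂ (tau β a₁ a₂ w) b < a₁ then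
        f (step β a₁ a₂ (tau β a₁ a₂ w) b) else 0) := by
  rw [S, Finset.sum_filter, Finset.sum_image, Finset.sum_product]
  · simp only [tau_concat]
  · rintro ⟨u, c⟩ _ ⟨v, d⟩ _ e
    obtain ⟨e1, e2⟩ := List.append_inj' e rfl
    simp only [List.cons.injEq, and_true] at e2
    simp only at e1
    rw [e1, e2]

/-- weighted cardinality -/
def kap (β a₁ a₂ : ℝ) (n : ℕ) : ℝ := (β ^ n)⁻¹ * (S β a₁ a₂ n).card

def G (β a₁ a₂ : ℝ) (n : ℕ) : ℝ :=
  (β ^ n)⁻¹ * ∑ w ∈ S β a₁ a₂ n, (1 + tau β a₁ a₂ w / a₁)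

lemma G_rec (H : Hyp β a₁ a₂) (n : ℕ) :
    G β a₁ a₂ (n + 1) ≤ G β a₁ a₂ n - (β - 1) / β * kap β a₁ a₂ n := by
  have hβ : 0 < β := by linarith [H.b1]
  unfold G kap
  rw [sum_S_succ n (fun t => 1 + t / a₁)]
  have : ∑ w ∈ S β a₁ a₂ n, ∑ b ∈ D a₁ a₂,
      (if 0 < step β a₁ a₂ (tau β a₁ a₂ w) b ∧ step β a₁ a₂ (tau β a₁ a₂ w) b < a₁ then
        (1 + step β a₁ a₂ (tau β a₁ a₂ w) b / a₁) else 0) ≤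
      ∑ w ∈ S β a₁ a₂ n, (β * (1 + tau β a₁ a₂ w / a₁) - (β - 1)) :=
    Finset.sum_le_sum fun w hw => child_ineq H (S_tau H hw)
  rw [Finset.sum_sub_distrib, ← Finset.mul_sum, Finset.sum_const, nsmul_eq_mul] at this
  refine (mul_le_mul_of_nonneg_left this (inv_pos.2 (pow_pos hβ _)).le).trans (le_of_eq ?_)
  field_simp
  ring

lemma kap_nonneg (H : Hyp β a₁ a₂) (n : ℕ) : 0 ≤ kap β a₁ a₂ n := by
  have hβ : 0 < β := by linarith [H.b1]
  unfold kap; positivity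

lemma G_nonneg (H : Hyp β a₁ a₂) (n : ℕ) : 0 ≤ G β a₁ a₂ n := by
  have hβ : 0 < β := by linarith [H.b1]
  unfold G
  refine mul_nonneg (by positivity) (Finset.sum_nonneg fun w hw => ?_)
  have := div_nonneg (S_tau H hw).1 H.p1.le
  linarith

lemma kap_summable (H : Hyp β a₁ a₂) : Summable (kap β a₁ a₂) := by
  have hβ : 0 < (β - 1) / β := div_pos (by linarith [H.b1]) (by linarith [H.b1])
  have key : ∀ n, (β - 1) / β * ∑ i ∈ Finset.range n, kap β a₁ a₂ i ≤ G β a₁ a₂ 0 - G β a₁ a₂ n := by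
    intro n
    induction n with
    | zero => simp
    | succ n ih =>
      rw [Finset.sum_range_succ, mul_add]
      linarith [G_rec H n]
  refine summable_of_sum_range_le (c := G β a₁ a₂ 0 / ((β - 1) / β)) (kap_nonneg H) fun n => ?_
  rw [le_div_iff₀' hβ]
  linarith [key n, G_nonneg H n]

/-- level sums -/
def lev (β a₁ a₂ : ℝ) (f : ℝ → ℝ) (n : ℕ) : ℝ :=
  (β ^ n)⁻¹ * ∑ w ∈ S β a₁ a₂ n, f (tau β a₁ a₂ w)

lemma lev_summable (H : Hyp β a₁ a₂) {f : ℝ → ℝ} {C : ℝ}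
    (h0 : ∀ t ∈ Icc 0 a₁, 0 ≤ f t) (hC : ∀ t ∈ Icc 0 a₁, f t ≤ C) :
    Summable (lev β a₁ a₂ f) := by
  have hβ : 0 < β := by linarith [H.b1]
  refine Summable.of_nonneg_of_le (fun n => ?_) (fun n => ?_) ((kap_summable H).mul_left C)
  · exact mul_nonneg (by positivity) (Finset.sum_nonneg fun w hw => h0 _ (S_tau H hw))
  · have := Finset.sum_le_sum (s := S β a₁ a₂ n) (f := fun w => f (tau β a₁ a₂ w))
      (g := fun _ => C) fun w hw => hC _ (S_tau H hw)
    rw [Finset.sum_const, nsmul_eq_mul] at this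
    refine (mul_le_mul_of_nonneg_left this (inv_pos.2 (pow_pos hβ n)).le).trans (le_of_eq ?_)
    unfold kap; ring

lemma lev_nonneg (H : Hyp β a₁ a₂) {f : ℝ → ℝ} (h0 : ∀ t ∈ Icc 0 a₁, 0 ≤ f t) (n : ℕ) :
    0 ≤ lev β a₁ a₂ f n := by
  have hβ : 0 < β := by linarith [H.b1]
  exact mul_nonneg (by positivity) (Finset.sum_nonneg fun w hw => h0 _ (S_tau H hw))

/-- number of full children -/
def nf (β a₁ a₂ t : ℝ) : ℝ := ∑ b ∈ D a₁ a₂, if step β a₁ a₂ t b = a₁ then 1 else 0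

lemma nf_nonneg (t : ℝ) : 0 ≤ nf β a₁ a₂ t :=
  Finset.sum_nonneg fun b _ => by split_ifs <;> norm_num

lemma nf_le (H : Hyp β a₁ a₂) (t : ℝ) : nf β a₁ a₂ t ≤ 3 := by
  rw [nf, sumD H]
  split_ifs <;> norm_num

lemma lev_T (H : Hyp β a₁ a₂) {E : Set ℝ} (hE : MeasurableSet E) (n : ℕ) :
    lev β a₁ a₂ (m (greedyT β a₁ a₂ ⁻¹' E)) n =
      lev β a₁ a₂ (m E) (n + 1) + β⁻¹ * lev β a₁ a₂ (nf β a₁ a₂) n * m E a₁ := by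
  have hβ : 0 < β := by linarith [H.b1]
  unfold lev
  rw [sum_S_succ n (m E)]
  have : ∀ w ∈ S β a₁ a₂ n, m (greedyT β a₁ a₂ ⁻¹' E) (tau β a₁ a₂ w) = β⁻¹ * (∑ b ∈ D a₁ a₂,
      (if 0 < step β a₁ a₂ (tau β a₁ a₂ w) b ∧ step β a₁ a₂ (tau β a₁ a₂ w) b < a₁ then
        m E (step β a₁ a₂ (tau β a₁ a₂ w) b) else 0)) +
      β⁻¹ * nf β a₁ a₂ (tau β a₁ a₂ w) * m E a₁ := by
    intro w hw
    rw [m_rec H hE (S_tau H hw), mul_assoc, ← mul_add, nf, Finset.sum_mul, ← Finset.sum_add_distrib]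
    congr 1
    refine Finset.sum_congr rfl fun b hb => ?_
    have hm := step_mem H (S_tau H hw) hb
    by_cases q1 : step β a₁ a₂ (tau β a₁ a₂ w) b = a₁
    · simp [q1]
    · by_cases q2 : 0 < step β a₁ a₂ (tau β a₁ a₂ w) b
      · simp [q1, q2, lt_of_le_of_ne hm.2 q1]
      · have : step β a₁ a₂ (tau β a₁ a₂ w) b = 0 := le_antisymm (not_lt.1 q2) hm.1
        simp [this, m_zero, H.p1.ne]
  rw [Finset.sum_congr rfl this, Finset.sum_add_distrib, ← Finset.mul_sum, ← Finset.sum_mul,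
    ← Finset.mul_sum, pow_succ]
  field_simp

/-- the total mass -/
def A (β a₁ a₂ : ℝ) (E : Set ℝ) : ℝ := ∑' n, lev β a₁ a₂ (m E) n

lemma m_summable (H : Hyp β a₁ a₂) (E : Set ℝ) : Summable (lev β a₁ a₂ (m E)) :=
  lev_summable H (C := a₁) (fun t _ => m_nonneg E t) (fun _ ht => (m_le E ht.1).trans ht.2)

lemma A_T' (H : Hyp β a₁ a₂) {E : Set ℝ} (hE : MeasurableSet E) :
    A β a₁ a₂ (greedyT β a₁ a₂ ⁻¹' E) =
      A β a₁ a₂ E - m E a₁ + β⁻¹ * (∑' n, lev β a₁ a₂ (nf β a₁ a₂) n) * m E a₁ := by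
  have s1 := m_summable H E
  have s2 : Summable (lev β a₁ a₂ (nf β a₁ a₂)) :=
    lev_summable H (C := 3) (fun t _ => nf_nonneg t) (fun t _ => nf_le H t)
  have h0 : lev β a₁ a₂ (m E) 0 = m E a₁ := by simp [lev, S, tau]
  unfold A
  simp only [lev_T H hE]
  rw [((summable_nat_add_iff 1).2 s1).tsum_add ((s2.mul_left _).mul_right _), tsum_mul_right,
    tsum_mul_left, s1.tsum_eq_zero_add, h0]
  ring

lemma A_congr (H : Hyp β a₁ a₂) {E F : Set ℝ} (h : ∀ t ∈ Icc 0 a₁, m E t = m F t) :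
    A β a₁ a₂ E = A β a₁ a₂ F := by
  unfold A lev
  congr 1
  ext n
  rw [Finset.sum_congr rfl fun w hw => h _ (S_tau H hw)]

lemma A_T (H : Hyp β a₁ a₂) {E : Set ℝ} (hE : MeasurableSet E) :
    A β a₁ a₂ (greedyT β a₁ a₂ ⁻¹' E) = A β a₁ a₂ E := by
  have h1 := A_T' H (E := Ico 0 a₁) measurableSet_Ico
  have h2 : A β a₁ a₂ (greedyT β a₁ a₂ ⁻¹' Ico 0 a₁) = A β a₁ a₂ (Ico 0 a₁) := by
    refine A_congr H fun t ht => ?_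
    unfold m
    congr 2
    ext x
    simp only [mem_inter_iff, mem_preimage]
    apply and_congr_left
    intro hx
    have hx' : x ∈ Ico 0 a₁ := ⟨hx.1, hx.2.trans_le ht.2⟩
    exact ⟨fun _ => hx', fun _ => T_maps H hx'⟩
  have h3 : m (Ico 0 a₁) a₁ = a₁ := by simp [m, H.p1.le]
  rw [h2, h3] at h1
  have hK : β⁻¹ * (∑' n, lev β a₁ a₂ (nf β a₁ a₂) n) = 1 := by
    have := H.p1.ne'
    apply mul_right_cancel₀ this
    linarith
  rw [A_T' H hE, hK]
  ring

lemma phi_eq (H : Hyp β a₁ a₂) {x : ℝ} (hx : x ∈ Ico 0 a₁) :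
    phi β a₁ a₂ x = ∑' n, lev β a₁ a₂ (fun t => (Ico 0 t).indicator (fun _ => (1 : ℝ)) x) n := by
  have s : Summable (lev β a₁ a₂ (fun t => (Ico 0 t).indicator (fun _ => (1 : ℝ)) x)) := by
    refine lev_summable H (C := 1) (fun t _ => ?_) (fun t _ => ?_)
    · exact indicator_nonneg (fun _ _ => zero_le_one) _
    · exact indicator_le_self' (fun _ _ => zero_le_one) _
  rw [s.tsum_eq_zero_add, phi]
  congr 1
  · simp [lev, S, tau, hx.1, hx.2]
  · congr 1
    ext n
    have e : {w | memB β a₁ a₂ (n + 1) w} = (S β a₁ a₂ (n + 1) : Set (List ℝ)) := by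
      ext w; exact memB_iff H n w
    have : ∑' w : {w : List ℝ // memB β a₁ a₂ (n + 1) w},
        Set.indicator ((greedyT β a₁ a₂)^[n + 1] '' cyl β a₁ a₂ w.1)
        (fun _ => (β ^ (n + 1))⁻¹) x = ∑' w : ({w | memB β a₁ a₂ (n + 1) w} : Set (List ℝ)),
        Set.indicator ((greedyT β a₁ a₂)^[n + 1] '' cyl β a₁ a₂ w.1)
        (fun _ => (β ^ (n + 1))⁻¹) x := rfl
    rw [this, e, Finset.tsum_subtype' (S β a₁ a₂ (n + 1)) (fun w =>
      Set.indicator ((greedyT β a₁ a₂)^[n + 1] '' cyl β a₁ a₂ w)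
        (fun _ => (β ^ (n + 1))⁻¹) x), lev, Finset.mul_sum]
    refine Finset.sum_congr rfl fun w hw => ?_
    have q := (S_spec H _ _).1 hw
    have hne : w ≠ [] := by rintro rfl; simp at q
    rw [← q.1, cyl_image H w q.2.1 hne]
    simp [indicator_apply]

lemma mu_apply (H : Hyp β a₁ a₂) {E : Set ℝ} (hE : MeasurableSet E) :
    muMeas β a₁ a₂ E = ENNReal.ofReal (A β a₁ a₂ E) := by
  have hβ : 0 < β := by linarith [H.b1]
  have hind0 : ∀ x : ℝ, ∀ t ∈ Icc 0 a₁, 0 ≤ (Ico 0 t).indicator (fun _ => (1 : ℝ)) x :=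
    fun x t _ => indicator_nonneg (fun _ _ => zero_le_one) _
  rw [muMeas, withDensity_apply _ hE, Measure.restrict_restrict hE]
  have h1 : ∀ x ∈ E ∩ Ico 0 a₁, ENNReal.ofReal (phi β a₁ a₂ x) =
      ∑' n, ENNReal.ofReal (lev β a₁ a₂ (fun t => (Ico 0 t).indicator (fun _ => (1 : ℝ)) x) n) := by
    intro x hx
    rw [phi_eq H hx.2, ENNReal.ofReal_tsum_of_nonneg (lev_nonneg H (hind0 x))]
    exact lev_summable H (C := 1) (hind0 x) (fun t _ => indicator_le_self' (fun _ _ => zero_le_one) _)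
  have h2 : ∀ n (x : ℝ),
      ENNReal.ofReal (lev β a₁ a₂ (fun t => (Ico 0 t).indicator (fun _ => (1 : ℝ)) x) n) =
      ∑ w ∈ S β a₁ a₂ n, (Ico 0 (tau β a₁ a₂ w)).indicator
        (fun _ => ENNReal.ofReal (β ^ n)⁻¹) x := by
    intro n x
    rw [lev, Finset.mul_sum, ENNReal.ofReal_sum_of_nonneg]
    · refine Finset.sum_congr rfl fun w _ => ?_
      simp only [indicator_apply]
      split_ifs <;> simp
    · intro w hw
      exact mul_nonneg (by positivity) (hind0 x _ (S_tau H hw))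
  rw [setLIntegral_congr_fun (hE.inter measurableSet_Ico) h1]
  simp only [h2]
  rw [lintegral_tsum]
  · rw [A, ENNReal.ofReal_tsum_of_nonneg (lev_nonneg H fun t _ => m_nonneg E t) (m_summable H E)]
    congr 1
    ext n
    rw [lintegral_finsetSum, lev, Finset.mul_sum, ENNReal.ofReal_sum_of_nonneg]
    · refine Finset.sum_congr rfl fun w hw => ?_
      rw [lintegral_indicator measurableSet_Ico, setLIntegral_const,
        Measure.restrict_apply measurableSet_Ico, ENNReal.ofReal_mul (by positivity), m,
        ENNReal.ofReal_toReal (m_fin _ _)]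
      congr 2
      ext x
      have := (S_tau H hw).2
      simp only [mem_inter_iff, mem_Ico]
      constructor
      · rintro ⟨q1, q2, _⟩; exact ⟨q2, q1⟩
      · rintro ⟨q2, q1⟩; exact ⟨q1, q2, q1.1, q1.2.trans_le this⟩
    · intro w _
      exact mul_nonneg (by positivity) (m_nonneg _ _)
    · intro w _
      exact measurable_const.indicator measurableSet_Ico
  · intro n
    refine (Finset.measurable_sum _ fun w _ => ?_).aemeasurable
    exact measurable_const.indicator measurableSet_Ico

lemma mu_ac : muMeas β a₁ a₂ ≪ volume :=
  (withDensity_absolutelyContinuous _ _).trans Measure.restrict_le_self.absolutelyContinuous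

lemma mu_univ_pos (H : Hyp β a₁ a₂) : muMeas β a₁ a₂ univ ≠ 0 := by
  rw [mu_apply H MeasurableSet.univ, Ne, ENNReal.ofReal_eq_zero, not_le]
  have h0 : lev β a₁ a₂ (m univ) 0 = a₁ := by simp [lev, S, tau, m, H.p1.le]
  have := (m_summable H univ).le_tsum 0 fun n _ => lev_nonneg H (fun t _ => m_nonneg univ t) n
  rw [h0] at this
  exact H.p1.trans_le this

end

end GB

/-- The greedy β-transformation `T` is ergodic with respect to
the probability measure `μ/μ([0, a₁))`: `T` preserves this probability measure
and every Borel set `E ⊆ [0, a₁)` with `T⁻¹E = E` (within `[0, a₁)`) has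
measure `0` or `1`. -/
theorem stmt15 (β a₁ a₂ : ℝ) (hβ1 : 1 < β) (hβ3 : β < 3)
    (ha₁ : 0 < a₁) (h12 : a₁ < a₂) (hc : condition6 β a₁ a₂) :
    IsProbabilityMeasure ((muMeas β a₁ a₂ Set.univ)⁻¹ • muMeas β a₁ a₂) ∧
    (∀ E : Set ℝ, E ⊆ Set.Ico 0 a₁ → MeasurableSet E →
      ((muMeas β a₁ a₂ Set.univ)⁻¹ • muMeas β a₁ a₂) (greedyT β a₁ a₂ ⁻¹' E) =
        ((muMeas β a₁ a₂ Set.univ)⁻¹ • muMeas β a₁ a₂) E) ∧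
    (∀ E : Set ℝ, E ⊆ Set.Ico 0 a₁ → MeasurableSet E →
      greedyT β a₁ a₂ ⁻¹' E ∩ Set.Ico 0 a₁ = E →
      ((muMeas β a₁ a₂ Set.univ)⁻¹ • muMeas β a₁ a₂) E = 0 ∨
      ((muMeas β a₁ a₂ Set.univ)⁻¹ • muMeas β a₁ a₂) E = 1) := by
  have H := GB.hyp_of hβ1 ha₁ h12 hc
  have hpos := GB.mu_univ_pos H
  have hfin : muMeas β a₁ a₂ univ ≠ ⊤ := by
    rw [GB.mu_apply H MeasurableSet.univ]; exact ENNReal.ofReal_ne_top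
  refine ⟨⟨?_⟩, ?_, ?_⟩
  · rw [Measure.smul_apply, smul_eq_mul, ENNReal.inv_mul_cancel hpos hfin]
  · intro E _ hE
    rw [Measure.smul_apply, Measure.smul_apply, GB.mu_apply H hE, GB.mu_apply H (GB.measT hE),
      GB.A_T H hE]
  · intro E hs hE hinv
    rcases GB.ergodic_vol H hE hs hinv with h | h
    · left
      rw [Measure.smul_apply, GB.mu_ac h, smul_zero]
    · right
      have e : muMeas β a₁ a₂ E = muMeas β a₁ a₂ univ := by
        have h1 : muMeas β a₁ a₂ (Ico 0 a₁ \ E) = 0 := GB.mu_ac h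
        have h2 : muMeas β a₁ a₂ (Ico 0 a₁)ᶜ = 0 := by
          refine withDensity_absolutelyContinuous _ _ ?_
          rw [Measure.restrict_apply measurableSet_Ico.compl, compl_inter_self, measure_empty]
        refine measure_congr (ae_eq_univ.2 (measure_mono_null ?_ (measure_union_null h1 h2)))
        intro x hx
        by_cases q : x ∈ Ico 0 a₁
        · exact Or.inl ⟨q, hx⟩
        · exact Or.inr q
      rw [Measure.smul_apply, smul_eq_mul, e, ENNReal.inv_mul_cancel hpos hfin]
end
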